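/- arXiv:2208.12174 — 3 statements merged into one kernel-verified Lean document; each statement's English description precedes it below -/
import Mathlib

section
/- For every n ≥ 1, the Chacon-type map U_n is an automorphism of T² and is a cyclic permutation of dyadic squares: there is an enumeration S_1, S_2, …, S_{4^n−1} of the 4^n − 1 half-open dyadic squares of side 2^{−n} in [0,1)² other than R_n = [1−2^{−n},1)×[0,2^{−n}), with S_1 = [0,2^{−n})×[1−2^{−n},1), such that U_n maps S_j onto S_{j+1} by a translation for every 1 ≤ j ≤ 4^n−2, maps S_{4^n−1} onto S_1 by a translation, and is the identity on R_n. -/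
/-!
On each dyadic square of side `2^{-n}` the map `U_n` is a translation onto another such square, so
it is described by a map `cellMap n` on indices. A translation on each piece of a finite measurable
partition is an automorphism as soon as it permutes the pieces; it remains to see that `cellMap n`
fixes the index of `R_n` and is a single cycle on the others.

Outside the block on which `U_n` differs from `U_{n-1}`, the index map commutes with passing to the
enclosing square of the previous level. By induction, each quarter of the previous `S_1` therefore
climbs the previous tower, up to the corresponding quarter of its last square. The block chains
these four columns together and inserts the three quarters of `R_{n-1}` other than `R_n`, so that
every square but `R_n` is reached from `S_1`. Since `cellMap n` is then onto the finite set of all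
indices, it is a bijection, and since the last square goes back to `S_1`, the orbit of `S_1` is a
cycle of length `4^n - 1`.
-/

open MeasureTheory Filter Set
open scoped ENNReal symmDiff

noncomputable section

instance fact01 : Fact ((0:ℝ) < 1) := ⟨one_pos⟩

/-- The two-dimensional torus `[0,1)²` with coordinatewise addition mod 1. -/
abbrev T2 : Type := AddCircle (1:ℝ) × AddCircle (1:ℝ)

/-- The canonical representative in `[0,1)` of a point of the circle. -/
noncomputable def rep (x : AddCircle (1:ℝ)) : ℝ := ((AddCircle.equivIco 1 0) x : ℝ)

/-- The point of the torus with coordinates `a`, `b` (mod 1). -/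
noncomputable def tv (a b : ℝ) : T2 := ((a : AddCircle (1:ℝ)), (b : AddCircle (1:ℝ)))

open Classical in
/-- The Chacon-type maps `U_n` on the torus. -/
noncomputable def chaconU : ℕ → T2 → T2
  | 0 => id
  | 1 => fun x =>
      if 0 ≤ rep x.1 ∧ rep x.1 < 1/2 ∧ 1/2 ≤ rep x.2 ∧ rep x.2 < 1 then x + tv (1/2) 0
      else if 1/2 ≤ rep x.1 ∧ rep x.1 < 1 ∧ 1/2 ≤ rep x.2 ∧ rep x.2 < 1 then
        x + tv (-(1/2)) (-(1/2))
      else if 0 ≤ rep x.1 ∧ rep x.1 < 1/2 ∧ 0 ≤ rep x.2 ∧ rep x.2 < 1/2 then x + tv 0 (1/2)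
      else x
  | (n+2) => fun x =>
      let s : ℝ := 1 / 2 ^ (n+2)
      let a := rep x.1
      let b := rep x.2
      if 1-4*s ≤ a ∧ a < 1-3*s ∧ s ≤ b ∧ b < 2*s then x + tv (5*s-1) (1-2*s)
      else if 1-3*s ≤ a ∧ a < 1-2*s ∧ s ≤ b ∧ b < 2*s then x + tv s 0
      else if 1-4*s ≤ a ∧ a < 1-3*s ∧ 0 ≤ b ∧ b < s then x + tv (3*s) s
      else if 1-3*s ≤ a ∧ a < 1-2*s ∧ 0 ≤ b ∧ b < s then x + tv s 0
      else if 1-2*s ≤ a ∧ a < 1 ∧ s ≤ b ∧ b < 2*s then x + tv (2*s-1) (1-3*s)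
      else if 1-2*s ≤ a ∧ a < 1-s ∧ 0 ≤ b ∧ b < s then x + tv (2*s-1) (1-s)
      else if 1-s ≤ a ∧ a < 1 ∧ 0 ≤ b ∧ b < s then x
      else chaconU (n+1) x

/-- An automorphism of the torus: measurable, bijective up to null sets with measurable
inverse, and measure-preserving. -/
def IsAutomorphism (U : T2 → T2) : Prop :=
  Measurable U ∧ ∃ V : T2 → T2, Measurable V ∧
    (∀ᵐ x ∂(volume : Measure T2), V (U x) = x) ∧
    (∀ᵐ x ∂(volume : Measure T2), U (V x) = x) ∧
    ∀ A : Set T2, MeasurableSet A → volume (U ⁻¹' A) = volume A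


/-- The half-open dyadic square of side `2^{-n}` with lower-left corner
`(i/2^n, j/2^n)`. -/
def dySq (n i j : ℕ) : Set T2 :=
  {x : T2 | (i : ℝ)/2^n ≤ rep x.1 ∧ rep x.1 < ((i : ℝ)+1)/2^n ∧
            (j : ℝ)/2^n ≤ rep x.2 ∧ rep x.2 < ((j : ℝ)+1)/2^n}

/-- `f` maps `A` onto `B` by a translation of the torus. -/
def MapsByTranslation (f : T2 → T2) (A B : Set T2) : Prop :=
  (∃ v : T2, ∀ x ∈ A, f x = x + v) ∧ f '' A = B

/-! ### The permutation of the indices -/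

/-- The indices of the dyadic squares of side `2^{-n}`. Columns are counted from the right and rows
from the bottom, so that `R_n` has index `(0, 0)` and the block `[1-4s,1)×[0,2s)` in the definition
of `chaconU` has the indices `(i, j)` with `i < 4` and `j < 2` at every level. -/
def dyadicGrid (n : ℕ) : Finset (ℕ × ℕ) := Finset.range (2 ^ n) ×ˢ Finset.range (2 ^ n)

lemma mem_dyadicGrid {n : ℕ} {p : ℕ × ℕ} : p ∈ dyadicGrid n ↔ p.1 < 2 ^ n ∧ p.2 < 2 ^ n := by
  simp [dyadicGrid]

lemma zero_mem_dyadicGrid (n : ℕ) : (0, 0) ∈ dyadicGrid n := by simp [mem_dyadicGrid]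

lemma card_dyadicGrid_erase_zero (n : ℕ) : ((dyadicGrid n).erase (0, 0)).card = 4 ^ n - 1 := by
  rw [Finset.card_erase_of_mem (zero_mem_dyadicGrid n), dyadicGrid, Finset.card_product,
    Finset.card_range, ← mul_pow]
  rfl

/-- The index of the top left square, which is the square `S_1`. -/
def corner (n : ℕ) : ℕ × ℕ := (2 ^ n - 1, 2 ^ n - 1)

/-- The index of one of the four quarters of the square with index `p`, at the next level: `a`
selects the right (`0`) or the left (`1`) half, `b` the lower or the upper one. -/
def quarter (a b : ℕ) (p : ℕ × ℕ) : ℕ × ℕ := (2 * p.1 + a, 2 * p.2 + b)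

/-- The index of the square of the previous level that contains the square with index `p`. -/
def parent (p : ℕ × ℕ) : ℕ × ℕ := (p.1 / 2, p.2 / 2)

lemma parent_mem_dyadicGrid {n : ℕ} {p : ℕ × ℕ} (hp : p ∈ dyadicGrid (n + 1)) :
    parent p ∈ dyadicGrid n := by
  grind [mem_dyadicGrid, parent]

lemma quarter_mem_dyadicGrid {n a b : ℕ} (ha : a < 2) (hb : b < 2) {p : ℕ × ℕ}
    (hp : p ∈ dyadicGrid n) : quarter a b p ∈ dyadicGrid (n + 1) := by
  grind [mem_dyadicGrid, quarter]

lemma quarter_parent (p : ℕ × ℕ) : quarter (p.1 % 2) (p.2 % 2) (parent p) = p :=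
  Prod.ext (Nat.div_add_mod _ _) (Nat.div_add_mod _ _)

lemma parent_quarter {a b : ℕ} (ha : a < 2) (hb : b < 2) (p : ℕ × ℕ) :
    parent (quarter a b p) = p := by
  ext <;> grind [parent, quarter]

lemma corner_mem_dyadicGrid (n : ℕ) : corner n ∈ dyadicGrid n := by
  simp [mem_dyadicGrid, corner]

lemma quarter_corner (n : ℕ) : quarter 1 1 (corner n) = corner (n + 1) := by
  ext <;> grind [quarter, corner, Nat.one_le_two_pow]

/-- The values of `cellMap (n + 2)` on the block of indices `(i, j)` with `i < 4` and `j < 2`. -/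
def blockMap (n : ℕ) : ℕ × ℕ → ℕ × ℕ
  | (3, 1) => quarter 0 1 (corner (n + 1))
  | (2, 1) => (1, 1)
  | (3, 0) => (0, 1)
  | (2, 0) => (1, 0)
  | (1, 1) => quarter 1 0 (corner (n + 1))
  | (0, 1) => quarter 0 0 (corner (n + 1))
  | (1, 0) => quarter 1 1 (corner (n + 1))
  | p => p

/-- The map on indices of level-`n` dyadic squares induced by `chaconU n`. At level `n + 2`, a
square outside the block of indices `(i, j)` with `i < 4` and `j < 2` moves along with its
parent. -/
def cellMap : ℕ → ℕ × ℕ → ℕ × ℕ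
  | 0, p => p
  | 1, (1, 1) => (0, 1)
  | 1, (0, 1) => (1, 0)
  | 1, (1, 0) => (1, 1)
  | 1, p => p
  | n + 2, p =>
    if p.1 < 4 ∧ p.2 < 2 then blockMap n p
    else quarter (p.1 % 2) (p.2 % 2) (cellMap (n + 1) (parent p))

lemma cellMap_zero_zero (n : ℕ) : cellMap n (0, 0) = (0, 0) := by
  match n with
  | 0 | 1 | n + 2 => rfl

lemma cellMap_one_zero (n : ℕ) : cellMap (n + 1) (1, 0) = corner (n + 1) := by
  cases n with
  | zero => rfl
  | succ n => exact quarter_corner (n + 1)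

lemma cellMap_quarter {n a b : ℕ} (ha : a < 2) (hb : b < 2) {p : ℕ × ℕ} (h₀ : p ≠ (0, 0))
    (h₁ : p ≠ (1, 0)) :
    cellMap (n + 2) (quarter a b p) = quarter a b (cellMap (n + 1) p) := by
  have houtside : ¬ ((quarter a b p).1 < 4 ∧ (quarter a b p).2 < 2) := by grind [quarter]
  have hfst : (quarter a b p).1 % 2 = a := by grind [quarter]
  have hsnd : (quarter a b p).2 % 2 = b := by grind [quarter]
  rw [cellMap, if_neg houtside, hfst, hsnd, parent_quarter ha hb]

lemma blockMap_mem_dyadicGrid {n : ℕ} {p : ℕ × ℕ} (hp : p ∈ dyadicGrid (n + 2)) :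
    blockMap n p ∈ dyadicGrid (n + 2) := by
  have hcorner := corner_mem_dyadicGrid (n + 1)
  have hzero := zero_mem_dyadicGrid (n + 1)
  unfold blockMap
  split
  case h_8 => exact hp
  case h_2 => exact quarter_mem_dyadicGrid (a := 1) (b := 1) (by simp) (by simp) hzero
  case h_3 => exact quarter_mem_dyadicGrid (a := 0) (b := 1) (by simp) (by simp) hzero
  case h_4 => exact quarter_mem_dyadicGrid (a := 1) (b := 0) (by simp) (by simp) hzero
  all_goals exact quarter_mem_dyadicGrid (by simp) (by simp) hcorner

lemma mapsTo_cellMap (n : ℕ) : MapsTo (cellMap n) (dyadicGrid n) (dyadicGrid n) := by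
  intro p hp
  fun_induction cellMap n p with
  | case1 | case5 => exact hp
  | case2 | case3 | case4 => simp [mem_dyadicGrid]
  | case6 n p _ => exact blockMap_mem_dyadicGrid hp
  | case7 n p _ ih =>
    exact quarter_mem_dyadicGrid (Nat.mod_lt _ two_pos) (Nat.mod_lt _ two_pos)
      (ih (parent_mem_dyadicGrid hp))

/-- `q` lies on the forward orbit of `p` under `cellMap n`. -/
def Reaches (n : ℕ) : ℕ × ℕ → ℕ × ℕ → Prop :=
  Relation.ReflTransGen fun p q => cellMap n p = q

lemma Reaches.exists_iterate_eq {n : ℕ} {p q : ℕ × ℕ} (h : Reaches n p q) :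
    ∃ m, (cellMap n)^[m] p = q := by
  induction h with
  | refl => exact ⟨0, rfl⟩
  | tail _ hqr ih =>
    obtain ⟨m, rfl⟩ := ih
    exact ⟨m + 1, (Function.iterate_succ_apply' _ _ _).trans hqr⟩

lemma Reaches.mem_dyadicGrid {n : ℕ} {p q : ℕ × ℕ} (h : Reaches n p q) (hp : p ∈ dyadicGrid n) :
    q ∈ dyadicGrid n := by
  obtain ⟨m, rfl⟩ := h.exists_iterate_eq
  exact (mapsTo_cellMap n).iterate m hp

/-- When the orbit passes through `(1, 0)`, it restarts at the corner, where there is nothing to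
prove; at any other index the quarters move along with their parent. -/
lemma Reaches.quarters {n a b : ℕ} (ha : a < 2) (hb : b < 2) {p : ℕ × ℕ}
    (h : Reaches (n + 1) (corner (n + 1)) p) :
    Reaches (n + 2) (quarter a b (corner (n + 1))) (quarter a b p) := by
  induction h with
  | refl => exact .refl
  | @tail q _ _ hq ih =>
    subst hq
    rcases eq_or_ne q (0, 0) with rfl | h₀
    · rwa [cellMap_zero_zero]
    rcases eq_or_ne q (1, 0) with rfl | h₁
    · rw [cellMap_one_zero]
      exact .refl
    · exact ih.tail (cellMap_quarter ha hb h₀ h₁)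

/-- The orbit climbs the four columns over the quarters of `S_1` one after the other. The block
chains the columns together, passing through the three quarters of `R_{n+1}` other than `R_{n+2}`:
`(1, 1)` after the second column, `(0, 1)` after the third and `(1, 0)` after the fourth. -/
lemma reaches_quarter_corner_and_quarter_zero {n : ℕ}
    (h : Reaches (n + 1) (corner (n + 1)) (1, 0)) :
    (∀ a < 2, ∀ b < 2, Reaches (n + 2) (corner (n + 2)) (quarter a b (corner (n + 1)))) ∧
      ∀ a < 2, ∀ b < 2, quarter a b (0, 0) ≠ (0, 0) →
        Reaches (n + 2) (corner (n + 2)) (quarter a b (0, 0)) := by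
  have climb {a b : ℕ} (ha : a < 2) (hb : b < 2)
      (hab : Reaches (n + 2) (corner (n + 2)) (quarter a b (corner (n + 1)))) :
      Reaches (n + 2) (corner (n + 2)) (quarter a b (1, 0)) :=
    hab.trans (h.quarters ha hb)
  have col₁₁ : Reaches (n + 2) (corner (n + 2)) (quarter 1 1 (corner (n + 1))) := by
    rw [quarter_corner]
    exact .refl
  have col₀₁ : Reaches (n + 2) (corner (n + 2)) (quarter 0 1 (corner (n + 1))) :=
    (climb one_lt_two one_lt_two col₁₁).tail rfl
  have sq₁₁ : Reaches (n + 2) (corner (n + 2)) (quarter 1 1 (0, 0)) :=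
    (climb two_pos one_lt_two col₀₁).tail rfl
  have col₁₀ : Reaches (n + 2) (corner (n + 2)) (quarter 1 0 (corner (n + 1))) := sq₁₁.tail rfl
  have sq₀₁ : Reaches (n + 2) (corner (n + 2)) (quarter 0 1 (0, 0)) :=
    (climb one_lt_two two_pos col₁₀).tail rfl
  have col₀₀ : Reaches (n + 2) (corner (n + 2)) (quarter 0 0 (corner (n + 1))) := sq₀₁.tail rfl
  have sq₁₀ : Reaches (n + 2) (corner (n + 2)) (quarter 1 0 (0, 0)) :=
    (climb two_pos two_pos col₀₀).tail rfl
  constructor <;> intro a ha b hb <;> interval_cases a <;> interval_cases b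
  exacts [col₀₀, col₀₁, col₁₀, col₁₁, absurd rfl, fun _ => sq₀₁, fun _ => sq₁₀, fun _ => sq₁₁]

lemma reaches_one_of_mem_dyadicGrid {p : ℕ × ℕ} (hp : p ∈ dyadicGrid 1) (h₀ : p ≠ (0, 0)) :
    Reaches 1 (corner 1) p := by
  have sq₀₁ : Reaches 1 (corner 1) (0, 1) := .single rfl
  have sq₁₀ : Reaches 1 (corner 1) (1, 0) := sq₀₁.tail rfl
  obtain ⟨i, j⟩ := p
  obtain ⟨hi, hj⟩ : i < 2 ∧ j < 2 := mem_dyadicGrid.1 hp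
  interval_cases i <;> interval_cases j
  · exact absurd rfl h₀
  · exact sq₀₁
  · exact sq₁₀
  · exact .refl

lemma reaches_of_mem_dyadicGrid {n : ℕ} {p : ℕ × ℕ} (hp : p ∈ dyadicGrid n) (h₀ : p ≠ (0, 0)) :
    Reaches n (corner n) p := by
  induction n using Nat.twoStepInduction generalizing p with
  | zero => grind [mem_dyadicGrid]
  | one => exact reaches_one_of_mem_dyadicGrid hp h₀
  | more n _ ih =>
    obtain ⟨hcorner, hzero⟩ := reaches_quarter_corner_and_quarter_zero
      (ih (p := (1, 0)) (by simp [mem_dyadicGrid]) (by simp))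
    have ha : p.1 % 2 < 2 := Nat.mod_lt _ two_pos
    have hb : p.2 % 2 < 2 := Nat.mod_lt _ two_pos
    rw [← quarter_parent p] at h₀ ⊢
    rcases eq_or_ne (parent p) (0, 0) with hparent | hparent
    · rw [hparent] at h₀ ⊢
      exact hzero _ ha _ hb h₀
    · exact (hcorner _ ha _ hb).trans ((ih (parent_mem_dyadicGrid hp) hparent).quarters ha hb)

lemma surjOn_cellMap (n : ℕ) : SurjOn (cellMap n) (dyadicGrid n) (dyadicGrid n) := by
  intro p hp
  rcases eq_or_ne p (0, 0) with rfl | h₀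
  · exact ⟨_, hp, cellMap_zero_zero n⟩
  obtain rfl | ⟨q, hq, hqp⟩ := (reaches_of_mem_dyadicGrid hp h₀).cases_tail
  · cases n with
    | zero => exact absurd rfl h₀
    | succ n => exact ⟨(1, 0), by simp [mem_dyadicGrid], cellMap_one_zero n⟩
  · exact ⟨q, Reaches.mem_dyadicGrid hq (corner_mem_dyadicGrid n), hqp⟩

lemma bijOn_cellMap (n : ℕ) : BijOn (cellMap n) (dyadicGrid n) (dyadicGrid n) :=
  ⟨mapsTo_cellMap n, Finset.injOn_of_surjOn_of_card_le _ (mapsTo_cellMap n) (surjOn_cellMap n)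
    le_rfl, surjOn_cellMap n⟩

lemma mapsTo_cellMap_erase_zero (n : ℕ) :
    MapsTo (cellMap n) ((dyadicGrid n).erase (0, 0)) ((dyadicGrid n).erase (0, 0)) := by
  intro p hp
  obtain ⟨h₀, hp⟩ := Finset.mem_erase.1 hp
  refine Finset.mem_erase.2 ⟨fun h => h₀ ?_, mapsTo_cellMap n hp⟩
  exact (bijOn_cellMap n).injOn hp (zero_mem_dyadicGrid n) (h.trans (cellMap_zero_zero n).symm)

lemma bijOn_iterate_Iio_minimalPeriod {α : Type*} {f : α → α} {x : α}
    (hx : x ∈ Function.periodicPts f) :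
    BijOn (f^[·] x) (Iio (Function.minimalPeriod f x)) {y | ∃ m, f^[m] x = y} := by
  refine ⟨fun m _ => ⟨m, rfl⟩, Function.iterate_injOn_Iio_minimalPeriod, fun y ⟨m, hm⟩ => ?_⟩
  exact ⟨m % Function.minimalPeriod f x,
    Nat.mod_lt _ (Function.minimalPeriod_pos_of_mem_periodicPts hx),
    Function.iterate_mod_minimalPeriod_eq.trans hm⟩

lemma mem_dyadicGrid_erase_zero_iff (n : ℕ) (p : ℕ × ℕ) :
    p ∈ (dyadicGrid (n + 1)).erase (0, 0) ↔ ∃ m, (cellMap (n + 1))^[m] (corner (n + 1)) = p := by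
  constructor
  · intro hp
    obtain ⟨h₀, hp⟩ := Finset.mem_erase.1 hp
    exact (reaches_of_mem_dyadicGrid hp h₀).exists_iterate_eq
  · rintro ⟨m, rfl⟩
    have hne : corner (n + 1) ≠ (0, 0) := by grind [corner, Nat.one_lt_two_pow]
    exact (mapsTo_cellMap_erase_zero (n + 1)).iterate m
      (Finset.mem_erase.2 ⟨hne, corner_mem_dyadicGrid (n + 1)⟩)

lemma corner_mem_periodicPts_cellMap (n : ℕ) :
    corner (n + 1) ∈ Function.periodicPts (cellMap (n + 1)) := by
  obtain ⟨m, hm⟩ := (mem_dyadicGrid_erase_zero_iff n (1, 0)).1 (by simp [mem_dyadicGrid])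
  refine ⟨m + 1, m.succ_pos, ?_⟩
  rw [Function.IsPeriodicPt, Function.IsFixedPt, Function.iterate_succ_apply', hm,
    cellMap_one_zero]

lemma bijOn_iterate_cellMap (n : ℕ) :
    BijOn ((cellMap (n + 1))^[·] (corner (n + 1)))
      (Iio (Function.minimalPeriod (cellMap (n + 1)) (corner (n + 1))))
      ((dyadicGrid (n + 1)).erase (0, 0)) := by
  convert bijOn_iterate_Iio_minimalPeriod (corner_mem_periodicPts_cellMap n)
  ext p
  exact mem_dyadicGrid_erase_zero_iff n p

lemma minimalPeriod_cellMap_corner (n : ℕ) :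
    Function.minimalPeriod (cellMap (n + 1)) (corner (n + 1)) = 4 ^ (n + 1) - 1 := by
  rw [← card_dyadicGrid_erase_zero, ← Set.ncard_coe_finset, ← (bijOn_iterate_cellMap n).image_eq,
    (bijOn_iterate_cellMap n).injOn.ncard_image, Set.ncard_Iio_nat]

/-! ### Dyadic squares and translations of the torus -/

lemma rep_mem_Ico (x : AddCircle (1 : ℝ)) : rep x ∈ Ico (0 : ℝ) 1 := by
  simpa [rep] using (AddCircle.equivIco (1 : ℝ) 0 x).2

lemma coe_rep (x : AddCircle (1 : ℝ)) : (rep x : AddCircle (1 : ℝ)) = x := AddCircle.coe_equivIco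

lemma rep_coe {a : ℝ} (ha : a ∈ Ico (0 : ℝ) 1) : rep (a : AddCircle (1 : ℝ)) = a := by
  rw [rep, AddCircle.coe_equivIco_mk_apply]
  simp [Int.fract_eq_self.2 ha]

lemma rep_add_coe {x : AddCircle (1 : ℝ)} {c : ℝ} (h : rep x + c ∈ Ico (0 : ℝ) 1) :
    rep (x + c) = rep x + c := by
  rw [← rep_coe h, AddCircle.coe_add, coe_rep]

lemma measurable_rep : Measurable rep :=
  measurable_subtype_coe.comp (AddCircle.measurableEquivIco (1 : ℝ) 0).measurable

/-- The number `i` of the half-open dyadic interval `[i/2^n, (i+1)/2^n)` that contains `x`. -/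
def dyadicFloor (n : ℕ) (x : AddCircle (1 : ℝ)) : ℕ := ⌊rep x * 2 ^ n⌋₊

lemma dyadicFloor_eq_iff {n i : ℕ} {x : AddCircle (1 : ℝ)} :
    dyadicFloor n x = i ↔ (i : ℝ) / 2 ^ n ≤ rep x ∧ rep x < ((i : ℝ) + 1) / 2 ^ n := by
  have hpos : (0 : ℝ) < 2 ^ n := by positivity
  rw [dyadicFloor, Nat.floor_eq_iff (mul_nonneg (rep_mem_Ico x).1 hpos.le), div_le_iff₀ hpos,
    lt_div_iff₀ hpos]

lemma dyadicFloor_lt (n : ℕ) (x : AddCircle (1 : ℝ)) : dyadicFloor n x < 2 ^ n := by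
  have hpos : (0 : ℝ) < 2 ^ n := by positivity
  rw [dyadicFloor, Nat.floor_lt (mul_nonneg (rep_mem_Ico x).1 hpos.le)]
  simpa using mul_lt_mul_of_pos_right (rep_mem_Ico x).2 hpos

lemma dyadicFloor_succ_div_two (n : ℕ) (x : AddCircle (1 : ℝ)) :
    dyadicFloor (n + 1) x / 2 = dyadicFloor n x := by
  rw [dyadicFloor, ← Nat.floor_div_ofNat, pow_succ, ← mul_assoc,
    mul_div_cancel_right₀ _ two_ne_zero, dyadicFloor]

lemma measurable_dyadicFloor (n : ℕ) : Measurable (dyadicFloor n) :=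
  Nat.measurable_floor.comp (measurable_rep.mul_const _)

lemma dyadicFloor_add_coe {n j : ℕ} (hj : j < 2 ^ n) (x : AddCircle (1 : ℝ)) :
    dyadicFloor n (x + (((j - dyadicFloor n x) / 2 ^ n : ℝ) : AddCircle (1 : ℝ))) = j := by
  have hpos : (0 : ℝ) < 2 ^ n := by positivity
  have hj' : ((j : ℝ) + 1) / 2 ^ n ≤ 1 := (div_le_one hpos).2 (mod_cast hj)
  have hj₀ : 0 ≤ (j : ℝ) / 2 ^ n := by positivity
  obtain ⟨hle, hlt⟩ := dyadicFloor_eq_iff.1 (rfl : dyadicFloor n x = _)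
  rw [add_div] at hlt hj'
  rw [dyadicFloor_eq_iff, rep_add_coe, add_div, sub_div]
  · constructor <;> linarith
  · rw [sub_div]
    constructor <;> linarith

lemma mul_le_rep_iff (n k : ℕ) (x : AddCircle (1 : ℝ)) :
    k * (1 / 2 ^ n) ≤ rep x ↔ k ≤ dyadicFloor n x := by
  have hpos : (0 : ℝ) < 2 ^ n := by positivity
  rw [dyadicFloor, Nat.le_floor_iff (mul_nonneg (rep_mem_Ico x).1 hpos.le), mul_one_div,
    div_le_iff₀ hpos]

lemma one_sub_mul_le_rep_iff (n k : ℕ) (x : AddCircle (1 : ℝ)) :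
    1 - k * (1 / 2 ^ n) ≤ rep x ↔ 2 ^ n - 1 - dyadicFloor n x < k := by
  have hpos : (0 : ℝ) < 2 ^ n := by positivity
  have hfloor : 2 ^ n ≤ dyadicFloor n x + k ↔ ((2 ^ n : ℕ) : ℝ) ≤ rep x * 2 ^ n + k := by
    rw [dyadicFloor, ← Nat.floor_add_natCast (mul_nonneg (rep_mem_Ico x).1 hpos.le),
      Nat.le_floor_iff (by have := (rep_mem_Ico x).1; positivity)]
  have hlt := dyadicFloor_lt n x
  calc 1 - k * (1 / 2 ^ n) ≤ rep x ↔ ((2 ^ n : ℕ) : ℝ) ≤ rep x * 2 ^ n + k := by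
        rw [mul_one_div, sub_le_iff_le_add, ← mul_le_mul_iff_left₀ hpos, add_mul,
          div_mul_cancel₀ _ hpos.ne', one_mul, Nat.cast_pow, Nat.cast_ofNat]
    _ ↔ 2 ^ n ≤ dyadicFloor n x + k := hfloor.symm
    _ ↔ 2 ^ n - 1 - dyadicFloor n x < k := by omega

/-- The index of the level-`n` dyadic square that contains `x`. -/
def cellIndex (n : ℕ) (x : T2) : ℕ × ℕ := (2 ^ n - 1 - dyadicFloor n x.1, dyadicFloor n x.2)

lemma cellIndex_mem_dyadicGrid (n : ℕ) (x : T2) : cellIndex n x ∈ dyadicGrid n := by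
  have hlt := dyadicFloor_lt n x.1
  exact mem_dyadicGrid.2 ⟨by rw [cellIndex]; omega, dyadicFloor_lt n x.2⟩

lemma parent_cellIndex (n : ℕ) (x : T2) : parent (cellIndex (n + 1) x) = cellIndex n x := by
  have h₁ := dyadicFloor_succ_div_two n x.1
  have h₂ := dyadicFloor_succ_div_two n x.2
  have hlt := dyadicFloor_lt n x.1
  ext <;> simp only [parent, cellIndex] <;> omega

lemma measurable_cellIndex (n : ℕ) : Measurable (cellIndex n) :=
  ((measurable_of_countable (2 ^ n - 1 - ·)).comp
    ((measurable_dyadicFloor n).comp measurable_fst)).prodMk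
    ((measurable_dyadicFloor n).comp measurable_snd)

/-- The translation of the torus that carries the level-`n` dyadic square with index `p` to the one
with index `q`. -/
def cellShift (n : ℕ) (p q : ℕ × ℕ) : T2 := tv ((p.1 - q.1) / 2 ^ n) ((q.2 - p.2) / 2 ^ n)

lemma tv_eq_cellShift {n : ℕ} {p q : ℕ × ℕ} {a b : ℝ} (ha : a * 2 ^ n = p.1 - q.1)
    (hb : b * 2 ^ n = q.2 - p.2) : tv a b = cellShift n p q := by
  rw [cellShift, ← ha, ← hb, mul_div_cancel_right₀ _ (by positivity),
    mul_div_cancel_right₀ _ (by positivity)]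

lemma cellShift_self (n : ℕ) (p : ℕ × ℕ) : cellShift n p p = 0 := by simp [cellShift, tv]

lemma cellShift_add_cellShift (n : ℕ) (p q r : ℕ × ℕ) :
    cellShift n p q + cellShift n q r = cellShift n p r := by
  simp only [cellShift, tv, Prod.mk_add_mk, ← AddCircle.coe_add]
  ring_nf

lemma cellShift_quarter (n a b : ℕ) (p q : ℕ × ℕ) :
    cellShift (n + 1) (quarter a b p) (quarter a b q) = cellShift n p q := by
  simp only [cellShift, quarter]
  congr 1 <;> push_cast <;> field_simp <;> ring

lemma cellIndex_add_cellShift {n : ℕ} {q : ℕ × ℕ} (hq : q ∈ dyadicGrid n) (x : T2) :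
    cellIndex n (x + cellShift n (cellIndex n x) q) = q := by
  obtain ⟨hq₁, hq₂⟩ := mem_dyadicGrid.1 hq
  have hlt := dyadicFloor_lt n x.1
  have hfst : ((2 ^ n - 1 - dyadicFloor n x.1 : ℕ) - q.1 : ℝ) =
      (2 ^ n - 1 - q.1 : ℕ) - dyadicFloor n x.1 := by
    rw [sub_eq_sub_iff_add_eq_add]
    norm_cast
    omega
  ext
  · simp only [cellIndex, cellShift, tv, Prod.fst_add, hfst]
    rw [dyadicFloor_add_coe (by omega)]
    omega
  · exact dyadicFloor_add_coe hq₂ x.2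

lemma cellIndex_add_cellShift_iff {n : ℕ} {p q : ℕ × ℕ} (hp : p ∈ dyadicGrid n)
    (hq : q ∈ dyadicGrid n) (x : T2) :
    cellIndex n (x + cellShift n p q) = q ↔ cellIndex n x = p := by
  constructor
  · intro h
    have hback := cellIndex_add_cellShift hp (x + cellShift n p q)
    rwa [h, add_assoc, cellShift_add_cellShift, cellShift_self, add_zero] at hback
  · rintro rfl
    exact cellIndex_add_cellShift hq x

lemma one_sub_mul_le_rep_fst_iff (n k : ℕ) (x : T2) :
    1 - k * (1 / 2 ^ n) ≤ rep x.1 ↔ (cellIndex n x).1 < k := one_sub_mul_le_rep_iff n k x.1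

lemma mul_le_rep_snd_iff (n k : ℕ) (x : T2) :
    k * (1 / 2 ^ n) ≤ rep x.2 ↔ k ≤ (cellIndex n x).2 := mul_le_rep_iff n k x.2

lemma chaconU_one (x : T2) :
    chaconU 1 x = x + cellShift 1 (cellIndex 1 x) (cellMap 1 (cellIndex 1 x)) := by
  have hi := one_sub_mul_le_rep_fst_iff 1 1 x
  have hj := mul_le_rep_snd_iff 1 1 x
  norm_num only [Nat.cast_one] at hi hj
  obtain ⟨hx₁, hx₁'⟩ := rep_mem_Ico x.1
  obtain ⟨hx₂, hx₂'⟩ := rep_mem_Ico x.2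
  obtain ⟨hp₁, hp₂⟩ := mem_dyadicGrid.1 (cellIndex_mem_dyadicGrid 1 x)
  simp only [chaconU, ← not_le, hi, hj, hx₁, hx₂, hx₁'.not_ge, hx₂'.not_ge]
  generalize cellIndex 1 x = p at *
  obtain ⟨i, j⟩ := p
  simp only at hp₁ hp₂
  interval_cases i <;> interval_cases j <;> norm_num [cellMap, cellShift, tv]

lemma chaconU_add_two (n : ℕ) (x : T2) :
    chaconU (n + 2) x =
      if (cellIndex (n + 2) x).1 < 4 ∧ (cellIndex (n + 2) x).2 < 2 then
        x + cellShift (n + 2) (cellIndex (n + 2) x) (blockMap n (cellIndex (n + 2) x))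
      else chaconU (n + 1) x := by
  have hi₁ := one_sub_mul_le_rep_fst_iff (n + 2) 1 x
  have hi₂ := one_sub_mul_le_rep_fst_iff (n + 2) 2 x
  have hi₃ := one_sub_mul_le_rep_fst_iff (n + 2) 3 x
  have hi₄ := one_sub_mul_le_rep_fst_iff (n + 2) 4 x
  have hj₁ := mul_le_rep_snd_iff (n + 2) 1 x
  have hj₂ := mul_le_rep_snd_iff (n + 2) 2 x
  norm_num only [Nat.cast_ofNat, Nat.cast_one, one_mul] at hi₁ hi₂ hi₃ hi₄ hj₁ hj₂
  simp only [chaconU, ← not_le, hi₁, hi₂, hi₃, hi₄, hj₁, hj₂, (rep_mem_Ico x.1).2.not_ge,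
    (rep_mem_Ico x.2).1]
  generalize cellIndex (n + 2) x = p
  obtain ⟨i, j⟩ := p
  by_cases hblock : i < 4 ∧ j < 2
  · obtain ⟨hi, hj⟩ := hblock
    have hcorner : ((2 ^ (n + 1) - 1 : ℕ) : ℝ) = 2 ^ (n + 1) - 1 := by simp
    interval_cases i <;> interval_cases j <;> simp +decide only [↓reduceIte]
    on_goal 1 => simp [blockMap, cellShift_self]
    all_goals
      refine congrArg (x + ·) (tv_eq_cellShift ?_ ?_) <;>
        simp only [blockMap, quarter, corner] <;> push_cast [hcorner] <;> field_simp <;> ring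
  · simp only
    rw [if_neg, if_neg, if_neg, if_neg, if_neg, if_neg, if_neg, if_neg] <;> omega

lemma chaconU_eq (n : ℕ) (x : T2) :
    chaconU n x = x + cellShift n (cellIndex n x) (cellMap n (cellIndex n x)) := by
  induction n using Nat.twoStepInduction with
  | zero => simp [chaconU, cellMap, cellShift_self]
  | one => exact chaconU_one x
  | more n _ ih =>
    rw [chaconU_add_two, cellMap]
    set p := cellIndex (n + 2) x
    split_ifs with hblock
    · rfl
    · rw [ih, ← cellShift_quarter _ (p.1 % 2) (p.2 % 2), ← parent_cellIndex, quarter_parent]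

/-! ### Piecewise translations -/

lemma measure_eq_sum_preimage_singleton_inter {α ι : Type*} [MeasurableSpace α]
    [MeasurableSpace ι] [MeasurableSingletonClass ι] (μ : Measure α) {c : α → ι} {s : Finset ι}
    (hc : Measurable c) (hcs : ∀ x, c x ∈ s) (A : Set α) :
    μ A = ∑ i ∈ s, μ (c ⁻¹' {i} ∩ A) := by
  have hmeas (i : ι) : MeasurableSet (c ⁻¹' {i}) := hc (measurableSet_singleton i)
  have huniv : c ⁻¹' s = univ := eq_univ_of_forall hcs
  simp_rw [← Measure.restrict_apply (hmeas _)]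
  rw [sum_measure_preimage_singleton s fun i _ => hmeas i, huniv, Measure.restrict_apply_univ]

section PiecewiseTranslation

variable {G ι : Type*} [AddGroup G] [MeasurableSpace G] [MeasurableSpace ι]
  {c : G → ι} {s : Finset ι} {π : ι → ι} {v : ι → G}

lemma measurePreserving_piecewise_add [MeasurableAdd₂ G] [DiscreteMeasurableSpace ι]
    (μ : Measure G) [μ.IsAddRightInvariant] (hc : Measurable c) (hcs : ∀ x, c x ∈ s)
    (hπ : BijOn π s s) (hv : ∀ i ∈ s, ∀ x, c (x + v i) = π i ↔ c x = i) :
    MeasurePreserving (fun x => x + v (c x)) μ μ := by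
  have hmeas : Measurable fun x => x + v (c x) :=
    measurable_id.add (Measurable.of_discrete.comp hc)
  refine ⟨hmeas, Measure.ext fun A hA => ?_⟩
  have hpiece (i : ι) (hi : i ∈ s) :
      c ⁻¹' {i} ∩ (fun x => x + v (c x)) ⁻¹' A = (· + v i) ⁻¹' (c ⁻¹' {π i} ∩ A) := by
    ext x
    simp only [mem_inter_iff, mem_preimage, mem_singleton_iff, hv i hi]
    exact and_congr_right fun hx => by rw [hx]
  calc μ.map (fun x => x + v (c x)) A
      = ∑ i ∈ s, μ (c ⁻¹' {i} ∩ (fun x => x + v (c x)) ⁻¹' A) := by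
        rw [Measure.map_apply hmeas hA, measure_eq_sum_preimage_singleton_inter μ hc hcs]
    _ = ∑ i ∈ s, μ (c ⁻¹' {π i} ∩ A) :=
        Finset.sum_congr rfl fun i hi => by rw [hpiece i hi, measure_preimage_add_right]
    _ = ∑ i ∈ s, μ (c ⁻¹' {i} ∩ A) :=
        Finset.sum_nbij π hπ.mapsTo hπ.injOn hπ.surjOn fun _ _ => rfl
    _ = μ A := (measure_eq_sum_preimage_singleton_inter μ hc hcs A).symm

lemma exists_measurable_inverse_piecewise_add [Nonempty ι] [MeasurableSub₂ G]
    [DiscreteMeasurableSpace ι] (hc : Measurable c) (hcs : ∀ x, c x ∈ s) (hπ : BijOn π s s)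
    (hv : ∀ i ∈ s, ∀ x, c (x + v i) = π i ↔ c x = i) :
    ∃ V : G → G, Measurable V ∧ Function.LeftInverse V (fun x => x + v (c x)) ∧
      Function.RightInverse V (fun x => x + v (c x)) := by
  refine ⟨fun y => y - v (Function.invFunOn π s (c y)),
    measurable_id.sub
      ((Measurable.of_discrete (f := fun i => v (Function.invFunOn π s i))).comp hc),
    fun x => ?_, fun y => ?_⟩
  · have hcx : c (x + v (c x)) = π (c x) := (hv _ (hcs x) x).2 rfl
    simp only [hcx, hπ.injOn.leftInvOn_invFunOn (hcs x), add_sub_cancel_right]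
  · obtain ⟨hi, hπi⟩ := Function.invFunOn_pos (hπ.surjOn (hcs y))
    have hcy : c (y - v (Function.invFunOn π s (c y))) = Function.invFunOn π s (c y) :=
      (hv _ hi _).1 (by rw [sub_add_cancel, hπi])
    simp only [hcy, sub_add_cancel]

end PiecewiseTranslation

lemma isAutomorphism_chaconU (n : ℕ) : IsAutomorphism (chaconU n) := by
  have : (volume : Measure T2).IsAddRightInvariant := by
    rw [Measure.volume_eq_prod]
    infer_instance
  have hv (p : ℕ × ℕ) (hp : p ∈ dyadicGrid n) (x : T2) :
      cellIndex n (x + cellShift n p (cellMap n p)) = cellMap n p ↔ cellIndex n x = p :=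
    cellIndex_add_cellShift_iff hp (mapsTo_cellMap n hp) x
  obtain ⟨V, hV, hleft, hright⟩ := exists_measurable_inverse_piecewise_add (measurable_cellIndex n)
    (cellIndex_mem_dyadicGrid n) (bijOn_cellMap n) hv
  have hU := measurePreserving_piecewise_add volume (measurable_cellIndex n)
    (cellIndex_mem_dyadicGrid n) (bijOn_cellMap n) hv
  rw [funext (chaconU_eq n)]
  exact ⟨hU.measurable, V, hV, ae_of_all _ hleft, ae_of_all _ hright,
    fun A hA => hU.measure_preimage hA.nullMeasurableSet⟩

/-! ### The cycle of squares -/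

/-- The reflection that turns column numbers counted from the right, as in `dyadicGrid n`, into
column numbers counted from the left, as in `dySq n`, and back. -/
def mirror (n : ℕ) (p : ℕ × ℕ) : ℕ × ℕ := (2 ^ n - 1 - p.1, p.2)

lemma mirror_mem_dyadicGrid {n : ℕ} {p : ℕ × ℕ} (hp : p ∈ dyadicGrid n) :
    mirror n p ∈ dyadicGrid n := by
  rw [mem_dyadicGrid] at hp ⊢
  exact ⟨by rw [mirror]; omega, hp.2⟩

lemma mirror_mirror {n : ℕ} {p : ℕ × ℕ} (hp : p ∈ dyadicGrid n) : mirror n (mirror n p) = p := by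
  rw [mem_dyadicGrid] at hp
  exact Prod.ext (by simp only [mirror]; omega) rfl

lemma mem_dySq_mirror_iff {n : ℕ} {p : ℕ × ℕ} (hp : p ∈ dyadicGrid n) {x : T2} :
    x ∈ dySq n (mirror n p).1 (mirror n p).2 ↔ cellIndex n x = p := by
  have hp' := mem_dyadicGrid.1 hp
  have hlt := dyadicFloor_lt n x.1
  rw [dySq, mem_ofPred_eq, ← and_assoc, ← dyadicFloor_eq_iff, ← dyadicFloor_eq_iff, Prod.ext_iff]
  simp only [mirror, cellIndex]
  omega

lemma mapsByTranslation_chaconU {n : ℕ} {p : ℕ × ℕ} (hp : p ∈ dyadicGrid n) :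
    MapsByTranslation (chaconU n) (dySq n (mirror n p).1 (mirror n p).2)
      (dySq n (mirror n (cellMap n p)).1 (mirror n (cellMap n p)).2) := by
  have htrans (x : T2) (hx : x ∈ dySq n (mirror n p).1 (mirror n p).2) :
      chaconU n x = x + cellShift n p (cellMap n p) := by
    rw [chaconU_eq, (mem_dySq_mirror_iff hp).1 hx]
  refine ⟨⟨_, htrans⟩, ?_⟩
  have hq := mapsTo_cellMap n hp
  rw [image_congr htrans, image_add_right]
  ext y
  rw [mem_preimage, mem_dySq_mirror_iff hp, mem_dySq_mirror_iff hq,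
    ← cellIndex_add_cellShift_iff hp hq, neg_add_cancel_right]

lemma chaconU_eq_self {n : ℕ} {x : T2} (hx : x ∈ dySq n (2 ^ n - 1) 0) : chaconU n x = x := by
  rw [chaconU_eq, (mem_dySq_mirror_iff (zero_mem_dyadicGrid n)).1 hx, cellMap_zero_zero,
    cellShift_self, add_zero]

lemma bijOn_mirror (n : ℕ) :
    BijOn (mirror n) ((dyadicGrid n).erase (0, 0))
      {p | p.1 < 2 ^ n ∧ p.2 < 2 ^ n ∧ p ≠ (2 ^ n - 1, 0)} := by
  refine InvOn.bijOn (f' := mirror n) ⟨fun p hp => mirror_mirror (Finset.mem_of_mem_erase hp),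
    fun p hp => mirror_mirror (mem_dyadicGrid.2 ⟨hp.1, hp.2.1⟩)⟩ ?_ ?_
  · intro p hp
    obtain ⟨h₀, hp⟩ := Finset.mem_erase.1 hp
    obtain ⟨hfst, hsnd⟩ := mem_dyadicGrid.1 (mirror_mem_dyadicGrid hp)
    refine ⟨hfst, hsnd, fun h => h₀ ?_⟩
    rw [← mirror_mirror hp, h]
    simp [mirror]
  · intro p ⟨hfst, hsnd, hne⟩
    have hp : p ∈ dyadicGrid n := mem_dyadicGrid.2 ⟨hfst, hsnd⟩
    refine Finset.mem_erase.2 ⟨fun h => hne ?_, mirror_mem_dyadicGrid hp⟩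
    rw [← mirror_mirror hp, h]
    rfl

/-- The sequence of (column, row) positions of the level-`n` dyadic squares visited by the orbit of
`S_1` under `chaconU n`, with columns counted from the left as in `dySq`. -/
def orbitSquare (n m : ℕ) : ℕ × ℕ := mirror n ((cellMap n)^[m] (corner n))

lemma bijOn_orbitSquare (n : ℕ) :
    BijOn (orbitSquare (n + 1)) (Iio (4 ^ (n + 1) - 1))
      {p | p.1 < 2 ^ (n + 1) ∧ p.2 < 2 ^ (n + 1) ∧ p ≠ (2 ^ (n + 1) - 1, 0)} := by
  rw [← minimalPeriod_cellMap_corner]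
  exact (bijOn_mirror (n + 1)).comp (bijOn_iterate_cellMap n)

lemma orbitSquare_zero (n : ℕ) : orbitSquare n 0 = (0, 2 ^ n - 1) := by
  simp [orbitSquare, mirror, corner]

lemma orbitSquare_four_pow_sub_one (n : ℕ) :
    orbitSquare (n + 1) (4 ^ (n + 1) - 1) = orbitSquare (n + 1) 0 := by
  rw [orbitSquare, ← minimalPeriod_cellMap_corner, Function.iterate_minimalPeriod]
  rfl

lemma mapsByTranslation_orbitSquare (n m : ℕ) :
    MapsByTranslation (chaconU n) (dySq n (orbitSquare n m).1 (orbitSquare n m).2)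
      (dySq n (orbitSquare n (m + 1)).1 (orbitSquare n (m + 1)).2) := by
  rw [orbitSquare, orbitSquare, Function.iterate_succ_apply']
  exact mapsByTranslation_chaconU ((mapsTo_cellMap n).iterate m (corner_mem_dyadicGrid n))

/-- For every `n ≥ 1`, the Chacon-type map `U_n` is an automorphism of the torus and a
cyclic permutation (by translations) of the `4^n - 1` dyadic squares of side `2^{-n}`
other than `R_n = [1-2^{-n},1) × [0,2^{-n})`, starting at `S_1 = [0,2^{-n}) × [1-2^{-n},1)`,
and is the identity on `R_n`. -/
theorem chaconU_cyclic_permutation (n : ℕ) (hn : 1 ≤ n) :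
    IsAutomorphism (chaconU n) ∧
    ∃ σ : ℕ → ℕ × ℕ,
      (∀ a, a < 4^n - 1 → ∀ b, b < 4^n - 1 → σ a = σ b → a = b) ∧
      (∀ m, m < 4^n - 1 → (σ m).1 < 2^n ∧ (σ m).2 < 2^n ∧ σ m ≠ (2^n - 1, 0)) ∧
      (∀ p : ℕ × ℕ, p.1 < 2^n → p.2 < 2^n → p ≠ (2^n - 1, 0) →
        ∃ m, m < 4^n - 1 ∧ σ m = p) ∧
      σ 0 = (0, 2^n - 1) ∧
      (∀ m, m + 1 < 4^n - 1 →
        MapsByTranslation (chaconU n) (dySq n (σ m).1 (σ m).2)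
          (dySq n (σ (m+1)).1 (σ (m+1)).2)) ∧
      MapsByTranslation (chaconU n) (dySq n (σ (4^n - 2)).1 (σ (4^n - 2)).2)
        (dySq n (σ 0).1 (σ 0).2) ∧
      (∀ x ∈ dySq n (2^n - 1) 0, chaconU n x = x) := by
  obtain ⟨k, rfl⟩ := Nat.exists_eq_add_of_le' hn
  have hbij := bijOn_orbitSquare k
  have hlast : 4 ^ (k + 1) - 2 + 1 = 4 ^ (k + 1) - 1 := by
    have := Nat.one_lt_pow k.succ_ne_zero (by norm_num : 1 < 4)
    omega
  refine ⟨isAutomorphism_chaconU _, orbitSquare (k + 1), fun a ha b hb => hbij.injOn ha hb,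
    fun m hm => hbij.mapsTo hm, fun p h₁ h₂ hne => hbij.surjOn ⟨h₁, h₂, hne⟩,
    orbitSquare_zero _, fun m _ => mapsByTranslation_orbitSquare _ m, ?_,
    fun x => chaconU_eq_self⟩
  have hmaps := mapsByTranslation_orbitSquare (k + 1) (4 ^ (k + 1) - 2)
  rwa [hlast, orbitSquare_four_pow_sub_one] at hmaps

end
end

section
/- For every n ≥ 2, with k = 2^n, the Chacon-type map U_n decomposes as U_n(x) = U_{n−1}(V_n(x)) for μ-a.e. x ∈ T², where V_n is the composition of movement maps at grid scale k given by V_n = E(k,k−3; k,k−2) ∘ R⁺(k,k−3) ∘ R⁺(k,k−3) ∘ S_c(k−1; k−3,k) ∘ S_c(k−1; k−3,k) ∘ R⁻(k,k−3) ∘ S_c(k; k−3,k−1), the rightmost map being applied first. -/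
/-!
All the maps involved translate cells of the grid of size `k = 2 ^ n` onto cells, so the identity
`U_n = U_{n-1} ∘ V_n` holds at every point as soon as it holds for the indices of the cells. Only
the `2 × 4` block of cells at the lower right corner matters: outside of it `V_n` is the identity
and `U_n` is `U_{n-1}` by definition. On the block `V_n` is a cycle of length seven fixing
`Q_{k,k}`. The block consists of two cells of the grid of size `K = k / 2`, on which the definition
of `U_{n-1}` is explicit: it translates `Q_{K,K-1}` onto `Q_{1,1}` and fixes `Q_{K,K}`. Subdividing
these two cells gives `U_{n-1}` on the eight cells of the block, and following the cycle by it gives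
the eight translations that define `U_n`.
-/

open MeasureTheory Filter Set
open scoped ENNReal symmDiff

noncomputable section

/-- The grid cell `Q_{i,j} = [(j-1)/k, j/k) × [(k-i)/k, (k-i+1)/k)` (1-based indices,
`i` the row index from the top, `j` the column index from the left). -/
def cell (k i j : ℕ) : Set T2 :=
  {x : T2 | ((j : ℝ)-1)/k ≤ rep x.1 ∧ rep x.1 < (j : ℝ)/k ∧
            ((k : ℝ)-i)/k ≤ rep x.2 ∧ rep x.2 < ((k : ℝ)-i+1)/k}

open Classical in
/-- Simple exchange `E(i,j; i',j')`: swaps the cells `Q_{i,j}` and `Q_{i',j'}` by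
translations, identity elsewhere. -/
noncomputable def mvE (k i j i' j' : ℕ) : T2 → T2 := fun x =>
  if x ∈ cell k i j then x + tv (((j' : ℝ) - j)/k) (((i : ℝ) - i')/k)
  else if x ∈ cell k i' j' then x + tv (((j : ℝ) - j')/k) (((i' : ℝ) - i)/k)
  else x

open Classical in
/-- Sort `S_c(i; j,j')`: translates `Q_{i,j'}` onto `Q_{i,j}` and `Q_{i,l}` onto
`Q_{i,l+1}` for `j ≤ l ≤ j'-1`, identity elsewhere. -/
noncomputable def mvS (k i j j' : ℕ) : T2 → T2 := fun x =>
  if x ∈ cell k i j' then x + tv (((j : ℝ) - j')/k) 0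
  else if ((j : ℝ)-1)/k ≤ rep x.1 ∧ rep x.1 < ((j' : ℝ)-1)/k ∧
      ((k : ℝ)-i)/k ≤ rep x.2 ∧ rep x.2 < ((k : ℝ)-i+1)/k then x + tv (1/k) 0
  else x

open Classical in
/-- Counterclockwise rotation `R⁻(i,j)`: cyclically translates
`Q_{i-1,j} → Q_{i,j} → Q_{i,j+1} → Q_{i-1,j+1} → Q_{i-1,j}`, identity elsewhere. -/
noncomputable def mvRminus (k i j : ℕ) : T2 → T2 := fun x =>
  if x ∈ cell k (i-1) j then x + tv 0 (-(1/k))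
  else if x ∈ cell k i j then x + tv (1/k) 0
  else if x ∈ cell k i (j+1) then x + tv 0 (1/k)
  else if x ∈ cell k (i-1) (j+1) then x + tv (-(1/k)) 0
  else x

open Classical in
/-- Clockwise rotation `R⁺(i,j)`, the inverse of `R⁻(i,j)`: cyclically translates
`Q_{i,j} → Q_{i-1,j} → Q_{i-1,j+1} → Q_{i,j+1} → Q_{i,j}`, identity elsewhere. -/
noncomputable def mvRplus (k i j : ℕ) : T2 → T2 := fun x =>
  if x ∈ cell k i j then x + tv 0 (1/k)
  else if x ∈ cell k (i-1) j then x + tv (1/k) 0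
  else if x ∈ cell k (i-1) (j+1) then x + tv 0 (-(1/k))
  else if x ∈ cell k i (j+1) then x + tv (-(1/k)) 0
  else x

/-- The point of the circle at relative position `u` in the arc `[m/k, (m+1)/k)`. The index is an
integer so that differences of indices need no truncation. -/
def gridPoint (k : ℕ) (m : ℤ) (u : Ico (0 : ℝ) 1) : AddCircle (1 : ℝ) := ((m + u) / k : ℝ)

/-- The point of the cell `Q_{i,j}`, where `p = (i, j)`, at relative position `(u, v)`. -/
def cellPoint (k : ℕ) (p : ℕ × ℕ) (u v : Ico (0 : ℝ) 1) : T2 :=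
  (gridPoint k (p.2 - 1) u, gridPoint k (k - p.1) v)

/-- The map `f` translates the cell `Q_p` onto the cell `Q_q` of the `k × k` grid. -/
abbrev Translates (k : ℕ) (f : T2 → T2) (p q : ℕ × ℕ) : Prop :=
  ∀ u v, f (cellPoint k p u v) = cellPoint k q u v

section GridPoint

variable {k : ℕ} {m d : ℤ} {u : Ico (0 : ℝ) 1} {t : ℝ}

lemma rep_gridPoint (hm : m ∈ Ico 0 (k : ℤ)) : rep (gridPoint k m u) = (m + u) / k := by
  have hm₀ : (0 : ℝ) ≤ m := by exact_mod_cast hm.1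
  have hm₁ : (m : ℝ) + 1 ≤ k := by exact_mod_cast hm.2
  obtain ⟨hu₀, hu₁⟩ := u.2
  have hk : (0 : ℝ) < k := by linarith
  refine AddCircle.equivIco_coe_of_mem ⟨by positivity, ?_⟩
  rw [zero_add, div_lt_one hk]
  linarith

lemma le_rep_gridPoint_iff (hm : m ∈ Ico 0 (k : ℤ)) (ht : t * k = d) :
    t ≤ rep (gridPoint k m u) ↔ d ≤ m := by
  have hk : (0 : ℝ) < k := by exact_mod_cast hm.1.trans_lt hm.2
  obtain ⟨hu₀, hu₁⟩ := u.2
  rw [rep_gridPoint hm, le_div_iff₀ hk, ht]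
  refine ⟨fun h => Int.lt_add_one_iff.1 ?_, fun h => ?_⟩
  · exact_mod_cast (by linarith : (d : ℝ) < m + 1)
  · have : (d : ℝ) ≤ m := by exact_mod_cast h
    linarith

lemma exists_eq_gridPoint (hk : 0 < k) (y : AddCircle (1 : ℝ)) :
    ∃ m ∈ Ico 0 (k : ℤ), ∃ u, y = gridPoint k m u := by
  have hk' : (0 : ℝ) < k := by exact_mod_cast hk
  obtain ⟨h₀, h₁⟩ : rep y ∈ Ico (0 : ℝ) (0 + 1) := (AddCircle.equivIco 1 0 y).2
  refine ⟨⌊rep y * k⌋, ⟨Int.floor_nonneg.2 (by positivity), Int.floor_lt.2 ?_⟩,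
    ⟨Int.fract (rep y * k), Int.fract_nonneg _, Int.fract_lt_one _⟩, ?_⟩
  · rw [Int.cast_natCast]
    nlinarith
  · rw [gridPoint, Int.floor_add_fract, mul_div_cancel_right₀ _ hk'.ne']
    exact AddCircle.coe_equivIco.symm

end GridPoint

section CellPoint

variable {k : ℕ} {p : ℕ × ℕ} {u v : Ico (0 : ℝ) 1} {d : ℤ} {t : ℝ}

lemma scale_ne_zero (hp : p ∈ Icc (1, 1) (k, k)) : k ≠ 0 :=
  Nat.one_le_iff_ne_zero.1 (hp.1.1.trans hp.2.1)

lemma column_mem_Ico (hp : p ∈ Icc (1, 1) (k, k)) : (p.2 : ℤ) - 1 ∈ Ico 0 (k : ℤ) := by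
  obtain ⟨⟨-, h₁⟩, -, h₂⟩ := hp
  simp only at h₁ h₂
  exact ⟨by omega, by omega⟩

lemma row_mem_Ico (hp : p ∈ Icc (1, 1) (k, k)) : (k : ℤ) - p.1 ∈ Ico 0 (k : ℤ) := by
  obtain ⟨⟨h₁, -⟩, h₂, -⟩ := hp
  simp only at h₁ h₂
  exact ⟨by omega, by omega⟩

lemma exists_eq_cellPoint (hk : 0 < k) (x : T2) :
    ∃ p ∈ Icc (1, 1) (k, k), ∃ u v, x = cellPoint k p u v := by
  obtain ⟨a, ⟨ha₀, ha₁⟩, u, hu⟩ := exists_eq_gridPoint hk x.1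
  obtain ⟨b, ⟨hb₀, hb₁⟩, v, hv⟩ := exists_eq_gridPoint hk x.2
  refine ⟨((k - b).toNat, (a + 1).toNat), ⟨⟨?_, ?_⟩, ?_, ?_⟩, u, v, Prod.ext ?_ ?_⟩
  iterate 4
    simp only
    omega
  · rw [hu, cellPoint]
    congr
    simp only
    omega
  · rw [hv, cellPoint]
    congr
    simp only
    omega

lemma cellPoint_add_tv (hk : k ≠ 0) {a b : ℝ} {i j i' j' : ℕ} (ha : a * k = j' - j)
    (hb : b * k = i - i') :
    cellPoint k (i, j) u v + tv a b = cellPoint k (i', j') u v := by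
  have hk' : (k : ℝ) ≠ 0 := by exact_mod_cast hk
  rw [← eq_div_iff hk'] at ha hb
  simp only [cellPoint, gridPoint, tv, Prod.mk_add_mk, ← AddCircle.coe_add, ha, hb]
  congr 2 <;> push_cast <;> ring

lemma le_rep_fst_cellPoint_iff (hp : p ∈ Icc (1, 1) (k, k)) (ht : t * k = d) :
    t ≤ rep (cellPoint k p u v).1 ↔ d < p.2 := by
  rw [cellPoint, le_rep_gridPoint_iff (column_mem_Ico hp) ht]
  omega

lemma rep_fst_cellPoint_lt_iff (hp : p ∈ Icc (1, 1) (k, k)) (ht : t * k = d) :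
    rep (cellPoint k p u v).1 < t ↔ p.2 ≤ d := by
  rw [← not_le, le_rep_fst_cellPoint_iff hp ht, not_lt]

lemma le_rep_snd_cellPoint_iff (hp : p ∈ Icc (1, 1) (k, k)) (ht : t * k = d) :
    t ≤ rep (cellPoint k p u v).2 ↔ p.1 + d ≤ k := by
  rw [cellPoint, le_rep_gridPoint_iff (row_mem_Ico hp) ht]
  omega

lemma rep_snd_cellPoint_lt_iff (hp : p ∈ Icc (1, 1) (k, k)) (ht : t * k = d) :
    rep (cellPoint k p u v).2 < t ↔ k < p.1 + d := by
  rw [← not_le, le_rep_snd_cellPoint_iff hp ht, not_le]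

lemma cellPoint_mem_rowBlock_iff (hp : p ∈ Icc (1, 1) (k, k)) {i j j' : ℕ} :
    (((j : ℝ) - 1) / k ≤ rep (cellPoint k p u v).1 ∧
      rep (cellPoint k p u v).1 < ((j' : ℝ) - 1) / k ∧
      ((k : ℝ) - i) / k ≤ rep (cellPoint k p u v).2 ∧
      rep (cellPoint k p u v).2 < ((k : ℝ) - i + 1) / k) ↔
      p.1 = i ∧ j ≤ p.2 ∧ p.2 < j' := by
  have hk : (k : ℝ) ≠ 0 := by exact_mod_cast scale_ne_zero hp
  have left : ((j : ℝ) - 1) / k * k = ((j - 1 : ℤ) : ℝ) := by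
    push_cast; exact div_mul_cancel₀ _ hk
  have right : ((j' : ℝ) - 1) / k * k = ((j' - 1 : ℤ) : ℝ) := by
    push_cast; exact div_mul_cancel₀ _ hk
  have bottom : ((k : ℝ) - i) / k * k = ((k - i : ℤ) : ℝ) := by
    push_cast; exact div_mul_cancel₀ _ hk
  have top : ((k : ℝ) - i + 1) / k * k = ((k - i + 1 : ℤ) : ℝ) := by
    push_cast; exact div_mul_cancel₀ _ hk
  rw [le_rep_fst_cellPoint_iff hp left, rep_fst_cellPoint_lt_iff hp right,
    le_rep_snd_cellPoint_iff hp bottom, rep_snd_cellPoint_lt_iff hp top]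
  omega

lemma cellPoint_mem_cell_iff (hp : p ∈ Icc (1, 1) (k, k)) {i j : ℕ} :
    cellPoint k p u v ∈ cell k i j ↔ p = (i, j) := by
  have h := cellPoint_mem_rowBlock_iff (u := u) (v := v) hp (i := i) (j := j) (j' := j + 1)
  rw [Nat.cast_add_one, add_sub_cancel_right] at h
  refine h.trans ?_
  rw [Prod.ext_iff]
  omega

end CellPoint

section Moves

variable {k : ℕ} {p : ℕ × ℕ}

lemma translates_mvE (hp : p ∈ Icc (1, 1) (k, k)) (i j i' j' : ℕ) :
    Translates k (mvE k i j i' j') p (Equiv.swap (i, j) (i', j') p) := by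
  intro u v
  have hk : k ≠ 0 := scale_ne_zero hp
  simp only [mvE, cellPoint_mem_cell_iff hp, Equiv.swap_apply_def]
  split_ifs with h h'
  · subst h
    exact cellPoint_add_tv hk (by field_simp) (by field_simp)
  · subst h'
    exact cellPoint_add_tv hk (by field_simp) (by field_simp)
  · rfl

lemma translates_mvS (hp : p ∈ Icc (1, 1) (k, k)) (i j j' : ℕ) :
    Translates k (mvS k i j j') p
      (if p = (i, j') then (i, j)
      else if p.1 = i ∧ j ≤ p.2 ∧ p.2 < j' then (i, p.2 + 1)
      else p) := by
  intro u v
  have hk : k ≠ 0 := scale_ne_zero hp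
  simp only [mvS, cellPoint_mem_cell_iff hp, cellPoint_mem_rowBlock_iff hp]
  split_ifs with h h'
  · subst h
    exact cellPoint_add_tv hk (by field_simp) (by ring)
  · obtain ⟨rfl, -⟩ := h'
    exact cellPoint_add_tv hk (by push_cast; field_simp; ring) (by ring)
  · rfl

lemma translates_mvRminus (hp : p ∈ Icc (1, 1) (k, k)) (i j : ℕ) :
    Translates k (mvRminus k i j) p
      (if p = (i - 1, j) then (i, j)
      else if p = (i, j) then (i, j + 1)
      else if p = (i, j + 1) then (i - 1, j + 1)
      else if p = (i - 1, j + 1) then (i - 1, j)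
      else p) := by
  intro u v
  have hk : k ≠ 0 := scale_ne_zero hp
  have hrow : 1 ≤ p.1 := hp.1.1
  simp only [mvRminus, cellPoint_mem_cell_iff hp]
  split_ifs with h₁ h₂ h₃ h₄
  · subst h₁
    have hi : 0 < i := by omega
    exact cellPoint_add_tv hk (by ring) (by rw [Nat.cast_pred hi]; field_simp; ring)
  · subst h₂
    exact cellPoint_add_tv hk (by push_cast; field_simp; ring) (by ring)
  · subst h₃
    exact cellPoint_add_tv hk (by ring) (by rw [Nat.cast_pred hrow]; field_simp; ring)
  · subst h₄
    exact cellPoint_add_tv hk (by push_cast; field_simp; ring) (by ring)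
  · rfl

lemma translates_mvRplus (hp : p ∈ Icc (1, 1) (k, k)) (i j : ℕ) :
    Translates k (mvRplus k i j) p
      (if p = (i, j) then (i - 1, j)
      else if p = (i - 1, j) then (i - 1, j + 1)
      else if p = (i - 1, j + 1) then (i, j + 1)
      else if p = (i, j + 1) then (i, j)
      else p) := by
  intro u v
  have hk : k ≠ 0 := scale_ne_zero hp
  have hrow : 1 ≤ p.1 := hp.1.1
  simp only [mvRplus, cellPoint_mem_cell_iff hp]
  split_ifs with h₁ h₂ h₃ h₄
  · subst h₁
    exact cellPoint_add_tv hk (by ring) (by rw [Nat.cast_pred hrow]; field_simp; ring)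
  · subst h₂
    exact cellPoint_add_tv hk (by push_cast; field_simp; ring) (by ring)
  · subst h₃
    have hi : 0 < i := by omega
    exact cellPoint_add_tv hk (by ring) (by rw [Nat.cast_pred hi]; field_simp; ring)
  · subst h₄
    exact cellPoint_add_tv hk (by push_cast; field_simp; ring) (by ring)
  · rfl

end Moves

/-- The composition `V_n` of movement maps at grid scale `k`. -/
def chaconV (k : ℕ) : T2 → T2 :=
  mvE k k (k - 3) k (k - 2) ∘ mvRplus k k (k - 3) ∘ mvRplus k k (k - 3) ∘
    mvS k (k - 1) (k - 3) k ∘ mvS k (k - 1) (k - 3) k ∘ mvRminus k k (k - 3) ∘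
    mvS k k (k - 3) (k - 1)

/-- The action of `V_n` on the indices of the cells: a cycle of length seven. -/
def chaconCycle (k : ℕ) (p : ℕ × ℕ) : ℕ × ℕ :=
  if p = (k - 1, k - 3) then (k - 1, k - 2)
  else if p = (k - 1, k - 2) then (k - 1, k - 1)
  else if p = (k - 1, k - 1) then (k, k - 3)
  else if p = (k, k - 3) then (k - 1, k)
  else if p = (k - 1, k) then (k, k - 2)
  else if p = (k, k - 2) then (k, k - 1)
  else if p = (k, k - 1) then (k - 1, k - 3)
  else p

/-- The indices of the eight cells at the lower right corner of the grid, outside of which `V_n` is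
the identity and `U_n` agrees with `U_{n-1}`. -/
def block (k : ℕ) : Set (ℕ × ℕ) := Icc (k - 1, k - 3) (k, k)

section Block

variable {k : ℕ} {p : ℕ × ℕ}

lemma eq_of_mem_block (hp : p ∈ block (k + 4)) :
    p = (k + 3, k + 1) ∨ p = (k + 3, k + 2) ∨ p = (k + 3, k + 3) ∨ p = (k + 3, k + 4) ∨
      p = (k + 4, k + 1) ∨ p = (k + 4, k + 2) ∨ p = (k + 4, k + 3) ∨ p = (k + 4, k + 4) := by
  simp only [block, mem_Icc, Prod.le_def] at hp
  simp only [Prod.ext_iff]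
  omega

lemma mem_grid_of_mem_block (hk : 4 ≤ k) (hp : p ∈ block k) : p ∈ Icc (1, 1) (k, k) :=
  Icc_subset_Icc_left (Prod.mk_le_mk.2 ⟨by omega, by omega⟩) hp

lemma chaconCycle_of_notMem_block (hp : p ∉ block k) : chaconCycle k p = p := by
  obtain ⟨i, j⟩ := p
  simp only [block, mem_Icc, Prod.mk_le_mk] at hp
  simp only [chaconCycle, Prod.mk.injEq]
  iterate 7 rw [if_neg (by omega)]

lemma translates_chaconV_of_notMem_block (hp : p ∈ Icc (1, 1) (k, k)) (hp' : p ∉ block k) :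
    Translates k (chaconV k) p p := by
  intro u v
  obtain ⟨i, j⟩ := p
  have hp_grid := hp
  simp only [block, mem_Icc, Prod.mk_le_mk] at hp_grid hp'
  have hS : mvS k k (k - 3) (k - 1) (cellPoint k (i, j) u v) = cellPoint k (i, j) u v := by
    simp only [translates_mvS hp, Prod.mk.injEq]
    iterate 2 rw [if_neg (by omega)]
  have hS' : mvS k (k - 1) (k - 3) k (cellPoint k (i, j) u v) = cellPoint k (i, j) u v := by
    simp only [translates_mvS hp, Prod.mk.injEq]
    iterate 2 rw [if_neg (by omega)]
  have hRminus : mvRminus k k (k - 3) (cellPoint k (i, j) u v) = cellPoint k (i, j) u v := by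
    simp only [translates_mvRminus hp, Prod.mk.injEq]
    iterate 4 rw [if_neg (by omega)]
  have hRplus : mvRplus k k (k - 3) (cellPoint k (i, j) u v) = cellPoint k (i, j) u v := by
    simp only [translates_mvRplus hp, Prod.mk.injEq]
    iterate 4 rw [if_neg (by omega)]
  have hE : mvE k k (k - 3) k (k - 2) (cellPoint k (i, j) u v) = cellPoint k (i, j) u v := by
    simp only [translates_mvE hp, Equiv.swap_apply_def, Prod.mk.injEq]
    iterate 2 rw [if_neg (by omega)]
  simp only [chaconV, Function.comp_apply, hS, hRminus, hS', hRplus, hE]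

lemma translates_chaconV_of_mem_block (hk : 4 ≤ k) (hp : p ∈ block k) :
    Translates k (chaconV k) p (chaconCycle k p) := by
  intro u v
  obtain ⟨k, rfl⟩ := Nat.exists_eq_add_of_le' hk
  rcases eq_of_mem_block hp with rfl | rfl | rfl | rfl | rfl | rfl | rfl | rfl <;>
    simp [chaconV, chaconCycle, translates_mvS, translates_mvRminus, translates_mvRplus,
      translates_mvE, Equiv.swap_apply_def, Nat.add_assoc]

lemma translates_chaconV (hk : 4 ≤ k) (hp : p ∈ Icc (1, 1) (k, k)) :
    Translates k (chaconV k) p (chaconCycle k p) := by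
  by_cases hp' : p ∈ block k
  · exact translates_chaconV_of_mem_block hk hp'
  · rw [chaconCycle_of_notMem_block hp']
    exact translates_chaconV_of_notMem_block hp hp'

end Block

section Refine

/-- The position, relative to an arc, of the point at relative position `u` in the `r`-th of the
`l` equal subarcs. -/
def subposition {l : ℕ} (r : Fin l) (u : Ico (0 : ℝ) 1) : Ico (0 : ℝ) 1 :=
  ⟨(r + u) / l, by
    have hr : (r : ℝ) + 1 ≤ l := by exact_mod_cast r.2
    obtain ⟨hu₀, hu₁⟩ := u.2
    have hl : (0 : ℝ) < l := by exact_mod_cast r.pos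
    exact ⟨by positivity, (div_lt_one hl).2 (by linarith)⟩⟩

lemma gridPoint_subposition {k l : ℕ} (r : Fin l) (m : ℤ) (u : Ico (0 : ℝ) 1) :
    gridPoint k m (subposition r u) = gridPoint (l * k) (l * m + r) u := by
  have hl : (l : ℝ) ≠ 0 := by exact_mod_cast r.pos.ne'
  simp only [gridPoint, subposition]
  congr 1
  push_cast
  field_simp
  ring

-- `r` counts rows from the bottom and `c` columns from the right, so that the subcell of `Q_{i,j}`
-- with `r = c = 0` is `Q_{li,lj}`.
lemma cellPoint_subposition {k l i j : ℕ} (hi : 1 ≤ i) (hj : 1 ≤ j) (r c : Fin l)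
    (u v : Ico (0 : ℝ) 1) :
    cellPoint k (i, j) (subposition c.rev u) (subposition r v) =
      cellPoint (l * k) (l * i - r, l * j - c) u v := by
  have hr : (r : ℕ) ≤ l * i := r.2.le.trans (Nat.le_mul_of_pos_right l hi)
  have hc : (c : ℕ) ≤ l * j := c.2.le.trans (Nat.le_mul_of_pos_right l hj)
  simp only [cellPoint, gridPoint_subposition, Fin.val_rev]
  congr 2
  · rw [Nat.cast_sub hc, Nat.cast_sub c.2]
    push_cast
    ring
  · rw [Nat.cast_sub hr]
    push_cast
    ring

lemma Translates.refine {k : ℕ} {f : T2 → T2} {i j i' j' : ℕ}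
    (h : Translates k f (i, j) (i', j')) (hi : 1 ≤ i) (hj : 1 ≤ j) (hi' : 1 ≤ i') (hj' : 1 ≤ j')
    {l : ℕ} (r c : Fin l) :
    Translates (l * k) f (l * i - r, l * j - c) (l * i' - r, l * j' - c) := by
  intro u v
  rw [← cellPoint_subposition hi hj, ← cellPoint_subposition hi' hj', h]

end Refine

section ChaconU

variable {n k : ℕ} {p : ℕ × ℕ}

lemma four_le_two_pow_add_two (n : ℕ) : 4 ≤ 2 ^ (n + 2) :=
  Nat.pow_le_pow_right two_pos (Nat.le_add_left 2 n)

lemma chaconU_add_two_cellPoint (hk : k = 2 ^ (n + 2)) (hp : p ∈ Icc (1, 1) (k, k))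
    {s : ℝ} (hs : s * k = 1) {x : T2} {u v : Ico (0 : ℝ) 1} (hx : x = cellPoint k p u v) :
    chaconU (n + 2) x =
      if p = (k - 1, k - 3) then x + tv (5 * s - 1) (1 - 2 * s)
      else if p = (k - 1, k - 2) then x + tv s 0
      else if p = (k, k - 3) then x + tv (3 * s) s
      else if p = (k, k - 2) then x + tv s 0
      else if p.1 = k - 1 ∧ k - 1 ≤ p.2 then x + tv (2 * s - 1) (1 - 3 * s)
      else if p = (k, k - 1) then x + tv (2 * s - 1) (1 - s)
      else if p = (k, k) then x
      else chaconU (n + 1) x := by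
  subst hx
  obtain ⟨i, j⟩ := p
  have hp_grid := hp
  simp only [mem_Icc, Prod.mk_le_mk] at hp_grid
  have hs' : (1 : ℝ) / 2 ^ (n + 2) = s := by
    rw [eq_div_of_mul_eq (by exact_mod_cast scale_ne_zero hp) hs, hk]
    push_cast
    rfl
  have hk4 : 4 ≤ k := hk ▸ four_le_two_pow_add_two n
  have x₄ : (1 - 4 * s) * k = ((k - 4 : ℤ) : ℝ) := by push_cast; linear_combination -4 * hs
  have x₃ : (1 - 3 * s) * k = ((k - 3 : ℤ) : ℝ) := by push_cast; linear_combination -3 * hs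
  have x₂ : (1 - 2 * s) * k = ((k - 2 : ℤ) : ℝ) := by push_cast; linear_combination -2 * hs
  have x₁ : (1 - s) * k = ((k - 1 : ℤ) : ℝ) := by push_cast; linear_combination -hs
  have x₀ : (1 : ℝ) * k = (k : ℤ) := by simp
  have y₀ : (0 : ℝ) * k = (0 : ℤ) := by simp
  have y₁ : s * k = (1 : ℤ) := by simpa using hs
  have y₂ : 2 * s * k = (2 : ℤ) := by push_cast; linear_combination 2 * hs
  rw [chaconU, hs']
  simp only [le_rep_fst_cellPoint_iff hp x₄, le_rep_fst_cellPoint_iff hp x₃,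
    le_rep_fst_cellPoint_iff hp x₂, le_rep_fst_cellPoint_iff hp x₁,
    rep_fst_cellPoint_lt_iff hp x₃, rep_fst_cellPoint_lt_iff hp x₂,
    rep_fst_cellPoint_lt_iff hp x₁, rep_fst_cellPoint_lt_iff hp x₀,
    le_rep_snd_cellPoint_iff hp y₀, le_rep_snd_cellPoint_iff hp y₁,
    rep_snd_cellPoint_lt_iff hp y₁, rep_snd_cellPoint_lt_iff hp y₂, Prod.mk.injEq]
  refine if_congr (by omega) rfl <| if_congr (by omega) rfl <| if_congr (by omega) rfl <|
    if_congr (by omega) rfl <| if_congr (by omega) rfl <| if_congr (by omega) rfl <|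
    if_congr (by omega) rfl rfl

lemma chaconU_add_two_of_notMem_block (hk : k = 2 ^ (n + 2)) (hp : p ∈ Icc (1, 1) (k, k))
    (hp' : p ∉ block k) (u v : Ico (0 : ℝ) 1) :
    chaconU (n + 2) (cellPoint k p u v) = chaconU (n + 1) (cellPoint k p u v) := by
  obtain ⟨i, j⟩ := p
  have hp_grid := hp
  simp only [block, mem_Icc, Prod.mk_le_mk] at hp_grid hp'
  have hs : (k : ℝ)⁻¹ * k = 1 := inv_mul_cancel₀ (by exact_mod_cast scale_ne_zero hp)
  simp only [chaconU_add_two_cellPoint hk hp hs rfl, Prod.mk.injEq]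
  iterate 7 rw [if_neg (by omega)]

lemma translates_chaconU_add_two (hk : k = 2 ^ (n + 2)) (hp : p ∈ block k) :
    Translates k (chaconU (n + 2)) p
      (if p = (k - 1, k - 3) then (1, 2)
      else if p = (k - 1, k - 2) then (k - 1, k - 1)
      else if p = (k - 1, k - 1) then (2, 1)
      else if p = (k - 1, k) then (2, 2)
      else if p = (k, k - 3) then (k - 1, k)
      else if p = (k, k - 2) then (k, k - 1)
      else if p = (k, k - 1) then (1, 1)
      else p) := by
  intro u v
  have hk4 : 4 ≤ k := hk ▸ four_le_two_pow_add_two n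
  have hk0 : k ≠ 0 := by omega
  have hs : (k : ℝ)⁻¹ * k = 1 := inv_mul_cancel₀ (by exact_mod_cast hk0)
  rw [chaconU_add_two_cellPoint hk (mem_grid_of_mem_block hk4 hp) hs rfl]
  generalize (k : ℝ)⁻¹ = s at hs
  obtain ⟨k, rfl⟩ := Nat.exists_eq_add_of_le' hk4
  push_cast at hs
  rcases eq_of_mem_block hp with rfl | rfl | rfl | rfl | rfl | rfl | rfl | rfl <;>
    simp only [Nat.add_one_sub_one, Nat.reduceSubDiff, Prod.mk.injEq, Nat.add_left_cancel_iff,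
      Nat.succ_ne_self, OfNat.ofNat_ne_one, OfNat.one_ne_ofNat, Nat.reduceEqDiff, and_self,
      and_true, and_false, add_le_add_iff_left, Nat.reduceLeDiff, le_refl, ↓reduceIte]
  · exact cellPoint_add_tv hk0 (by push_cast; linear_combination 5 * hs)
      (by push_cast; linear_combination -2 * hs)
  · exact cellPoint_add_tv hk0 (by push_cast; linear_combination hs) (by ring)
  · exact cellPoint_add_tv hk0 (by push_cast; linear_combination 2 * hs)
      (by push_cast; linear_combination -3 * hs)
  · exact cellPoint_add_tv hk0 (by push_cast; linear_combination 2 * hs)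
      (by push_cast; linear_combination -3 * hs)
  · exact cellPoint_add_tv hk0 (by push_cast; linear_combination 3 * hs)
      (by push_cast; linear_combination hs)
  · exact cellPoint_add_tv hk0 (by push_cast; linear_combination hs) (by ring)
  · exact cellPoint_add_tv hk0 (by push_cast; linear_combination 2 * hs)
      (by push_cast; linear_combination -hs)

lemma translates_chaconU_one (hp : p ∈ Icc (1, 1) (2, 2)) :
    Translates 2 (chaconU 1) p
      (if p = (1, 1) then (1, 2) else if p = (1, 2) then (2, 1) else if p = (2, 1) then (1, 1)
      else p) := by
  intro u v
  have half : (1 / 2 : ℝ) * (2 : ℕ) = (1 : ℤ) := by norm_num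
  have one : (1 : ℝ) * (2 : ℕ) = (2 : ℤ) := by norm_num
  have zero : (0 : ℝ) * (2 : ℕ) = (0 : ℤ) := by norm_num
  simp only [chaconU, le_rep_fst_cellPoint_iff hp half, le_rep_fst_cellPoint_iff hp zero,
    rep_fst_cellPoint_lt_iff hp half, rep_fst_cellPoint_lt_iff hp one,
    le_rep_snd_cellPoint_iff hp half, le_rep_snd_cellPoint_iff hp zero,
    rep_snd_cellPoint_lt_iff hp half, rep_snd_cellPoint_lt_iff hp one]
  obtain ⟨i, j⟩ := p
  obtain ⟨⟨hi, hj⟩, hi', hj'⟩ := hp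
  simp only at hi hj hi' hj'
  interval_cases i <;> interval_cases j <;> norm_num <;>
    exact cellPoint_add_tv two_ne_zero (by norm_num) (by norm_num)

lemma translates_chaconU_left_of_corner (hk : k = 2 ^ (n + 1)) :
    Translates k (chaconU (n + 1)) (k, k - 1) (1, 1) := by
  obtain _ | n := n
  · subst hk
    simpa using translates_chaconU_one (p := (2, 1)) (by simp)
  · have hk4 : 4 ≤ k := hk ▸ four_le_two_pow_add_two n
    have hp : (k, k - 1) ∈ block k :=
      ⟨⟨Nat.sub_le _ _, by simp only; omega⟩, le_rfl, Nat.sub_le _ _⟩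
    have := translates_chaconU_add_two hk hp
    obtain ⟨k, rfl⟩ := Nat.exists_eq_add_of_le' hk4
    simpa using this

lemma translates_chaconU_corner (hk : k = 2 ^ (n + 1)) :
    Translates k (chaconU (n + 1)) (k, k) (k, k) := by
  obtain _ | n := n
  · subst hk
    simpa using translates_chaconU_one (p := (2, 2)) (by simp)
  · have hk4 : 4 ≤ k := hk ▸ four_le_two_pow_add_two n
    have hp : (k, k) ∈ block k := ⟨⟨Nat.sub_le _ _, Nat.sub_le _ _⟩, le_rfl⟩
    have := translates_chaconU_add_two hk hp
    obtain ⟨k, rfl⟩ := Nat.exists_eq_add_of_le' hk4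
    simpa using this

lemma translates_chaconU_add_one (hk : k = 2 ^ (n + 2)) (hp : p ∈ block k) :
    Translates k (chaconU (n + 1)) p
      (if p.2 ≤ k - 2 then (p.1 + 2 - k, p.2 + 4 - k) else p) := by
  obtain ⟨i, j⟩ := p
  have hk4 : 4 ≤ k := hk ▸ four_le_two_pow_add_two n
  obtain ⟨⟨hi, hj⟩, hi', hj'⟩ := hp
  simp only at hi hj hi' hj'
  obtain ⟨l, hl⟩ : ∃ l, l = 2 ^ (n + 1) := ⟨_, rfl⟩
  obtain rfl : k = 2 * l := by rw [hk, hl]; ring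
  let r : Fin 2 := ⟨2 * l - i, by omega⟩
  split_ifs with h
  · let c : Fin 2 := ⟨2 * l - 2 - j, by omega⟩
    have := (translates_chaconU_left_of_corner hl).refine (by omega) (by omega) le_rfl le_rfl r c
    convert this using 2 <;> simp only [r, c] <;> omega
  · let c : Fin 2 := ⟨2 * l - j, by omega⟩
    have := (translates_chaconU_corner hl).refine (by omega) (by omega) (by omega) (by omega) r c
    convert this using 2 <;> simp only [r, c] <;> omega

lemma chaconCycle_mem_block (hk : 4 ≤ k) (hp : p ∈ block k) : chaconCycle k p ∈ block k := by
  obtain ⟨k, rfl⟩ := Nat.exists_eq_add_of_le' hk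
  rcases eq_of_mem_block hp with rfl | rfl | rfl | rfl | rfl | rfl | rfl | rfl <;>
    simp [chaconCycle, block]

lemma chaconU_add_two_of_mem_block (hk : k = 2 ^ (n + 2)) (hp : p ∈ block k)
    (u v : Ico (0 : ℝ) 1) :
    chaconU (n + 2) (cellPoint k p u v) =
      chaconU (n + 1) (cellPoint k (chaconCycle k p) u v) := by
  have hk4 : 4 ≤ k := hk ▸ four_le_two_pow_add_two n
  rw [translates_chaconU_add_two hk hp,
    translates_chaconU_add_one hk (chaconCycle_mem_block hk4 hp)]
  obtain ⟨k, rfl⟩ := Nat.exists_eq_add_of_le' hk4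
  rcases eq_of_mem_block hp with rfl | rfl | rfl | rfl | rfl | rfl | rfl | rfl <;>
    simp [chaconCycle]

end ChaconU

theorem chaconU_decomposition_general (n : ℕ) (hn : 2 ≤ n) :
    chaconU n = chaconU (n - 1) ∘ chaconV (2 ^ n) := by
  obtain ⟨n, rfl⟩ := Nat.exists_eq_add_of_le' hn
  funext x
  obtain ⟨k, hk⟩ : ∃ k, k = 2 ^ (n + 2) := ⟨_, rfl⟩
  have hk4 : 4 ≤ k := hk ▸ four_le_two_pow_add_two n
  obtain ⟨p, hp, u, v, rfl⟩ := exists_eq_cellPoint (zero_lt_four.trans_le hk4) x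
  rw [← hk, Function.comp_apply, translates_chaconV hk4 hp]
  by_cases hp' : p ∈ block k
  · exact chaconU_add_two_of_mem_block hk hp' u v
  · rw [chaconCycle_of_notMem_block hp']
    exact chaconU_add_two_of_notMem_block hk hp hp' u v

/-- For `n ≥ 2` and `k = 2^n`, the Chacon-type map decomposes a.e. as
`U_n = U_{n-1} ∘ V_n`, where
`V_n = E(k,k-3;k,k-2) ∘ R⁺(k,k-3) ∘ R⁺(k,k-3) ∘ S_c(k-1;k-3,k) ∘ S_c(k-1;k-3,k) ∘
 R⁻(k,k-3) ∘ S_c(k;k-3,k-1)` (rightmost applied first). -/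
theorem chaconU_decomposition (n : ℕ) (hn : 2 ≤ n) (k : ℕ) (hk : k = 2^n) :
    ∀ᵐ x ∂(volume : Measure T2),
      chaconU n x =
        chaconU (n-1)
          ((mvE k k (k-3) k (k-2) ∘
            mvRplus k k (k-3) ∘
            mvRplus k k (k-3) ∘
            mvS k (k-1) (k-3) k ∘
            mvS k (k-1) (k-3) k ∘
            mvRminus k k (k-3) ∘
            mvS k k (k-3) (k-1)) x) := by
  subst hk
  exact .of_forall (congrFun (chaconU_decomposition_general n hn))

end
end

section
/- Let U be the μ-a.e. limit of the Chacon-type maps U_n, let h_k = 4^{k−1} − 1, and for n ≥ 2 let Q_n = [0,2^{1−n})×[1−2^{1−n},1) (so μ(Q_n) = 4^{1−n}). Then for every n ≥ 2 and every k ≥ n, μ(U^{h_k}(Q_n) ∩ Q_n) ≥ (1/4)·μ(Q_n) = 4^{−n}. -/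
open MeasureTheory Filter Set
open scoped ENNReal symmDiff

noncomputable section

/-!
Cut the torus into dyadic squares of side `2 ^ (-m)` and set aside the lower right corner square.
Each map `U_n` with `n ≥ m` permutes the remaining squares along one column of `4 ^ m - 1` of them
by translations, so the limit `U` does the same, and the column of order `m + 1` is obtained by
cutting every square of the column of order `m` into its four quarters: first come all the upper
left quarters, then, with no spacer in between, all the upper right quarters. The first `h_{m+1}`
iterates of `U` therefore move the upper left quarter of every square of the column onto its upper
right quarter. A union `Q` of squares of the column thus satisfies
`μ(U^{h_{m+1}}(Q) ∩ Q) ≥ μ(Q) / 4`, and `Q_n` is such a union for `m = k - 1`.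
-/

section TranslationsAlmostEverywhere

variable {G : Type*} [AddGroup G] [MeasurableSpace G] [MeasurableAdd G] {μ : Measure G}
  [μ.IsAddRightInvariant]

lemma tendsto_ae_of_ae_eq_add_mem_countable {C : Set G} (hC : C.Countable) {f : G → G}
    (hf : ∀ᵐ x ∂μ, ∃ c ∈ C, f x = x + c) : Tendsto f (ae μ) (ae μ) := by
  intro s hs
  rw [mem_map]
  have hshift : ∀ᵐ x ∂μ, ∀ c ∈ C, x + c ∈ s := by
    refine (ae_ball_iff hC).2 fun c _ => ?_
    exact (measurePreserving_add_right μ c).quasiMeasurePreserving.ae hs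
  filter_upwards [hf, hshift] with x ⟨c, hc, hx⟩ hxs
  simpa only [mem_preimage, hx] using hxs c hc

lemma measure_le_measure_image_inter {f : G → G} {E A : Set G} {c : G}
    (hf : ∀ᵐ x ∂μ, x ∈ E → f x = x + c) (hEA : E ⊆ A) (hcA : ∀ x ∈ E, x + c ∈ A) :
    μ E ≤ μ (f '' A ∩ A) := by
  rw [← measure_preimage_add_right μ c (f '' A ∩ A)]
  refine measure_mono_ae ?_
  filter_upwards [hf] with x hx hxE
  exact ⟨⟨x, hEA hxE, hx hxE⟩, hcA x hxE⟩

end TranslationsAlmostEverywhere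

namespace Chacon

instance : (volume : Measure T2).IsAddRightInvariant :=
  inferInstanceAs (Measure.prod volume volume).IsAddRightInvariant

instance : IsProbabilityMeasure (volume : Measure T2) :=
  haveI : IsProbabilityMeasure (volume : Measure (AddCircle (1 : ℝ))) :=
    ⟨by simp only [AddCircle.measure_univ, ENNReal.ofReal_one]⟩
  inferInstanceAs (IsProbabilityMeasure (Measure.prod volume volume))

/-! ### Dyadic squares -/

lemma rep_nonneg (x : AddCircle (1 : ℝ)) : 0 ≤ rep x :=
  (AddCircle.equivIco 1 0 x).2.1

lemma rep_lt_one (x : AddCircle (1 : ℝ)) : rep x < 1 :=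
  (AddCircle.equivIco 1 0 x).2.2.trans_eq (zero_add 1)

lemma measurable_rep : Measurable rep :=
  measurable_subtype_coe.comp (AddCircle.measurableEquivIco (1 : ℝ) 0).measurable

lemma rep_add_coe {x : AddCircle (1 : ℝ)} {a : ℝ} (h0 : 0 ≤ rep x + a) (h1 : rep x + a < 1) :
    rep (x + a) = rep x + a := by
  have hx : x + a = ((rep x + a : ℝ) : AddCircle (1 : ℝ)) := by
    rw [AddCircle.coe_add, rep, AddCircle.coe_equivIco]
  rw [hx, rep, AddCircle.equivIco_coe_eq ⟨h0, by simpa using h1⟩]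

/-- The index `(i, j)` of the dyadic square `[i, i + 1) × [j, j + 1)`, scaled by `2 ^ (-m)`, that
contains `x`. -/
def gridIndex (m : ℕ) (x : T2) : ℤ × ℤ := (⌊2 ^ m * rep x.1⌋, ⌊2 ^ m * rep x.2⌋)

/-- The indices of the dyadic squares of side `2 ^ (-m)` in `[0, 1)²`. -/
def gridSquares (m : ℕ) : Finset (ℤ × ℤ) := Finset.Ico 0 (2 ^ m) ×ˢ Finset.Ico 0 (2 ^ m)

/-- The translation of the torus that moves dyadic squares of side `2 ^ (-m)` by `v` squares. -/
def gridVec (m : ℕ) (v : ℤ × ℤ) : T2 := tv (v.1 / 2 ^ m) (v.2 / 2 ^ m)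

/-- The left (`0`) or right (`1`), lower (`0`) or upper (`1`) quarter of the square with index `p`,
as the index of a square of half the side. -/
def quarter (α : Fin 2 × Fin 2) (p : ℤ × ℤ) : ℤ × ℤ := (2 * p.1 + α.1.val, 2 * p.2 + α.2.val)

lemma mem_gridSquares {m : ℕ} {p : ℤ × ℤ} :
    p ∈ gridSquares m ↔ (0 ≤ p.1 ∧ p.1 < 2 ^ m) ∧ 0 ≤ p.2 ∧ p.2 < 2 ^ m := by
  simp only [gridSquares, Finset.mem_product, Finset.mem_Ico]

lemma card_gridSquares (m : ℕ) : (gridSquares m).card = 4 ^ m := by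
  simp [gridSquares, Int.toNat_pow_of_nonneg, ← mul_pow]

lemma gridIndex_mem_gridSquares (m : ℕ) (x : T2) : gridIndex m x ∈ gridSquares m := by
  have hM : (0 : ℝ) < 2 ^ m := by positivity
  have floor_mem (y : AddCircle (1 : ℝ)) : 0 ≤ ⌊2 ^ m * rep y⌋ ∧ ⌊2 ^ m * rep y⌋ < 2 ^ m := by
    refine ⟨Int.floor_nonneg.2 (mul_nonneg hM.le (rep_nonneg y)), Int.floor_lt.2 ?_⟩
    push_cast
    exact mul_lt_of_lt_one_right hM (rep_lt_one y)
  exact mem_gridSquares.2 ⟨floor_mem x.1, floor_mem x.2⟩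

lemma floor_rep_add_div {m : ℕ} {x : AddCircle (1 : ℝ)} {v : ℤ} (h0 : 0 ≤ ⌊2 ^ m * rep x⌋ + v)
    (h1 : ⌊2 ^ m * rep x⌋ + v < 2 ^ m) :
    ⌊2 ^ m * rep (x + (v / 2 ^ m : ℝ))⌋ = ⌊2 ^ m * rep x⌋ + v := by
  have hM : (0 : ℝ) < 2 ^ m := by positivity
  have hscale : 2 ^ m * (rep x + v / 2 ^ m) = 2 ^ m * rep x + v := by field_simp
  rw [← Int.floor_add_intCast, ← hscale] at h0 h1 ⊢
  have h0' : 0 ≤ rep x + v / 2 ^ m := nonneg_of_mul_nonneg_right (Int.floor_nonneg.1 h0) hM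
  have h1' : rep x + v / 2 ^ m < 1 := by
    have := Int.floor_lt.1 h1
    push_cast at this
    exact (mul_lt_iff_lt_one_right hM).1 this
  rw [rep_add_coe h0' h1']

lemma gridIndex_add_gridVec {m : ℕ} {x : T2} {v : ℤ × ℤ}
    (h : gridIndex m x + v ∈ gridSquares m) :
    gridIndex m (x + gridVec m v) = gridIndex m x + v := by
  obtain ⟨⟨h1, h2⟩, h3, h4⟩ := mem_gridSquares.1 h
  exact Prod.ext (floor_rep_add_div h1 h2) (floor_rep_add_div h3 h4)

lemma gridVec_add (m : ℕ) (v w : ℤ × ℤ) : gridVec m (v + w) = gridVec m v + gridVec m w := by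
  simp only [gridVec, tv, Prod.fst_add, Prod.snd_add, Int.cast_add, add_div, AddCircle.coe_add,
    Prod.mk_add_mk]

lemma gridVec_zero (m : ℕ) : gridVec m 0 = 0 := by simp [gridVec, tv]

lemma gridVec_quarter_sub (m : ℕ) (α : Fin 2 × Fin 2) (p q : ℤ × ℤ) :
    gridVec (m + 1) (quarter α q - quarter α p) = gridVec m (q - p) := by
  have half (a b c : ℤ) :
      ((2 * a + c - (2 * b + c) : ℤ) : ℝ) / 2 ^ (m + 1) = ((a - b : ℤ) : ℝ) / 2 ^ m := by
    push_cast
    field_simp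
    ring
  simp only [gridVec, quarter, Prod.fst_sub, Prod.snd_sub, half]

lemma gridIndex_eq_gridIndex_succ_div_two (m : ℕ) (x : T2) :
    gridIndex m x = ((gridIndex (m + 1) x).1 / 2, (gridIndex (m + 1) x).2 / 2) := by
  have floor_half (y : ℝ) : ⌊2 ^ m * y⌋ = ⌊2 ^ (m + 1) * y⌋ / 2 := by
    have := Int.floor_div_natCast (2 ^ (m + 1) * y) 2
    rw [Nat.cast_ofNat, Nat.cast_ofNat] at this
    rw [← this, pow_succ]
    congr 1
    ring
  simp only [gridIndex, floor_half]

lemma gridIndex_of_gridIndex_succ_eq_quarter {m : ℕ} {x : T2} {α : Fin 2 × Fin 2} {p : ℤ × ℤ}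
    (hx : gridIndex (m + 1) x = quarter α p) : gridIndex m x = p := by
  rw [gridIndex_eq_gridIndex_succ_div_two, hx, quarter]
  ext <;> simp only <;> omega

lemma exists_eq_quarter (p : ℤ × ℤ) : ∃ α q, p = quarter α q := by
  refine ⟨(⟨(p.1 % 2).toNat, by omega⟩, ⟨(p.2 % 2).toNat, by omega⟩), (p.1 / 2, p.2 / 2), ?_⟩
  ext <;> simp only [quarter] <;> omega

lemma quarter_inj {α β : Fin 2 × Fin 2} {p q : ℤ × ℤ} :
    quarter α p = quarter β q ↔ α = β ∧ p = q := by
  simp only [quarter, Prod.ext_iff, Fin.ext_iff]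
  omega

lemma quarter_mem_gridSquares {m : ℕ} {α : Fin 2 × Fin 2} {p : ℤ × ℤ} :
    quarter α p ∈ gridSquares (m + 1) ↔ p ∈ gridSquares m := by
  simp only [mem_gridSquares, quarter, pow_succ]
  omega

/-! ### Lebesgue measure of unions of dyadic squares -/

lemma measurable_gridIndex (m : ℕ) : Measurable (gridIndex m) :=
  ((measurable_rep.comp measurable_fst).const_mul _).floor.prodMk
    ((measurable_rep.comp measurable_snd).const_mul _).floor

lemma volume_gridIndex_fiber_le {m : ℕ} (p : ℤ × ℤ) {q : ℤ × ℤ} (hq : q ∈ gridSquares m) :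
    volume (gridIndex m ⁻¹' {p}) ≤ volume (gridIndex m ⁻¹' {q}) := by
  rw [← measure_preimage_add_right volume (gridVec m (q - p)) (gridIndex m ⁻¹' {q})]
  refine measure_mono fun x (hx : gridIndex m x = p) => ?_
  have hxq : gridIndex m x + (q - p) = q := by rw [hx, add_sub_cancel]
  exact (gridIndex_add_gridVec (hxq.symm ▸ hq)).trans hxq

lemma volume_gridIndex_preimage_eq_sum (m : ℕ) (S : Finset (ℤ × ℤ)) :
    volume (gridIndex m ⁻¹' S) = ∑ p ∈ S, volume (gridIndex m ⁻¹' {p}) :=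
  (sum_measure_preimage_singleton S fun p _ =>
    measurable_gridIndex m (measurableSet_singleton p)).symm

lemma volume_gridIndex_fiber {m : ℕ} {p : ℤ × ℤ} (hp : p ∈ gridSquares m) :
    volume (gridIndex m ⁻¹' {p}) = (4 ^ m)⁻¹ := by
  have hfiber : ∀ q ∈ gridSquares m, volume (gridIndex m ⁻¹' {q}) = volume (gridIndex m ⁻¹' {p}) :=
    fun q hq => (volume_gridIndex_fiber_le q hp).antisymm (volume_gridIndex_fiber_le p hq)
  have huniv : gridIndex m ⁻¹' gridSquares m = univ :=
    eq_univ_of_forall (gridIndex_mem_gridSquares m)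
  have htotal := volume_gridIndex_preimage_eq_sum m (gridSquares m)
  rw [huniv, measure_univ, Finset.sum_congr rfl hfiber, Finset.sum_const, card_gridSquares,
    nsmul_eq_mul, Nat.cast_pow, Nat.cast_ofNat] at htotal
  exact ENNReal.eq_inv_of_mul_eq_one_left ((mul_comm _ _).trans htotal.symm)

lemma volume_gridIndex_preimage {m : ℕ} {S : Finset (ℤ × ℤ)} (hS : S ⊆ gridSquares m) :
    volume (gridIndex m ⁻¹' S) = S.card / 4 ^ m := by
  rw [volume_gridIndex_preimage_eq_sum,
    Finset.sum_congr rfl fun p hp => volume_gridIndex_fiber (hS hp), Finset.sum_const, nsmul_eq_mul,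
    div_eq_mul_inv]

/-! ### Translations carrying squares to squares -/

lemma finite_range_chaconU_sub (n : ℕ) : (range fun x => chaconU n x - x).Finite := by
  induction n using chaconU.induct with
  | case1 => exact (finite_singleton 0).subset (range_subset_iff.2 fun x => by simp [chaconU])
  | case2 =>
    refine Finite.subset
      (s := {tv (1 / 2) 0, tv (-(1 / 2)) (-(1 / 2)), tv 0 (1 / 2), 0}) (by simp)
      (range_subset_iff.2 fun x => ?_)
    simp only [chaconU]
    split_ifs <;> simp
  | case3 n ih =>
    let s : ℝ := 1 / 2 ^ (n + 2)
    refine Finite.subset (s := {tv (5 * s - 1) (1 - 2 * s), tv s 0, tv (3 * s) s,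
      tv (2 * s - 1) (1 - 3 * s), tv (2 * s - 1) (1 - s), 0} ∪ range fun x => chaconU (n + 1) x - x)
      (Finite.union (by simp) ih) (range_subset_iff.2 fun x => ?_)
    simp only [chaconU]
    split_ifs <;> simp [s]

lemma tendsto_ae_of_chaconU_eventually_eq {U : T2 → T2}
    (hlim : ∀ᵐ x ∂(volume : Measure T2), ∃ N : ℕ, ∀ n, N ≤ n → chaconU n x = U x) :
    Tendsto U (ae volume) (ae volume) := by
  have hcount : (⋃ n, range fun x => chaconU n x - x).Countable :=
    countable_iUnion fun n => (finite_range_chaconU_sub n).countable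
  refine tendsto_ae_of_ae_eq_add_mem_countable hcount ?_
  filter_upwards [hlim] with x ⟨N, hN⟩
  exact ⟨U x - x, mem_iUnion.2 ⟨N, x, by simp only [hN N le_rfl]⟩, (add_sub_cancel x (U x)).symm⟩

lemma chaconU_add_two_eq {n : ℕ} {x : T2}
    (hx : rep x.1 < 1 - 4 * (1 / 2 ^ (n + 2)) ∨ 2 * (1 / 2 ^ (n + 2)) ≤ rep x.2) :
    chaconU (n + 2) x = chaconU (n + 1) x := by
  have hs : (0 : ℝ) < 1 / 2 ^ (n + 2) := by positivity
  simp only [chaconU]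
  generalize (1 / 2 ^ (n + 2) : ℝ) = s at hs hx ⊢
  repeat rw [if_neg (by rintro ⟨_, _, _, _⟩; rcases hx with hx | hx <;> linarith)]

lemma rep_mem_Ico_of_gridIndex_eq {m : ℕ} {x : T2} {c d : ℤ} (h : gridIndex m x = (2 ^ m - c, d)) :
    rep x.1 ∈ Ico (1 - c * (1 / 2 ^ m) : ℝ) (1 - (c - 1) * (1 / 2 ^ m)) ∧
      rep x.2 ∈ Ico (d * (1 / 2 ^ m) : ℝ) ((d + 1) * (1 / 2 ^ m)) := by
  have hs : (2 : ℝ) ^ m * (1 / 2 ^ m) = 1 := mul_one_div_cancel (by positivity)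
  obtain ⟨h1, h2⟩ := Prod.ext_iff.1 h
  obtain ⟨h1, h1'⟩ := Int.floor_eq_iff.1 h1
  obtain ⟨h2, h2'⟩ := Int.floor_eq_iff.1 h2
  push_cast at h1 h1'
  refine ⟨⟨?_, ?_⟩, ?_, ?_⟩
  · linear_combination (1 / 2 ^ m : ℝ) * h1 + (rep x.1 - 1) * hs
  · linear_combination (1 / 2 ^ m : ℝ) * h1' + (1 - rep x.1) * hs
  · linear_combination (1 / 2 ^ m : ℝ) * h2 + rep x.2 * hs
  · linear_combination (1 / 2 ^ m : ℝ) * h2' - rep x.2 * hs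

lemma chaconU_eq_of_le {m n : ℕ} (hmn : m + 1 ≤ n) {x : T2}
    (hx : (gridIndex (m + 1) x).1 + 2 < 2 ^ (m + 1) ∨ 1 ≤ (gridIndex (m + 1) x).2) :
    chaconU n x = chaconU (m + 1) x := by
  induction n, hmn using Nat.le_induction with
  | base => rfl
  | succ n hmn ih =>
    rw [← ih]
    obtain ⟨l, rfl⟩ := Nat.exists_eq_add_of_le' (Nat.one_le_of_lt hmn)
    obtain ⟨c, hc⟩ : ∃ c, (gridIndex (m + 1) x).1 = 2 ^ (m + 1) - c :=
      ⟨_, (sub_sub_cancel ..).symm⟩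
    obtain ⟨⟨-, h1⟩, h2, -⟩ := rep_mem_Ico_of_gridIndex_eq (Prod.ext hc rfl)
    have hs : (1 / 2 ^ (l + 2) : ℝ) ≤ 1 / 2 ^ (m + 1) / 2 := by
      rw [div_div, ← pow_succ]
      exact one_div_pow_le_one_div_pow_of_le one_le_two (by omega)
    have hs0 : (0 : ℝ) < 1 / 2 ^ (m + 1) := by positivity
    refine chaconU_add_two_eq (hx.imp (fun hx => ?_) fun hx => ?_)
    · have : (3 : ℝ) ≤ c := by exact_mod_cast (by omega : (3 : ℤ) ≤ c)
      nlinarith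
    · have : (1 : ℝ) ≤ (gridIndex (m + 1) x).2 := by exact_mod_cast hx
      nlinarith

/-- Every map `U_n` with `n ≥ m`, hence also their limit, moves the dyadic square of side `2 ^ (-m)`
with index `p` onto the one with index `q` by a translation. -/
def Carries (m : ℕ) (p q : ℤ × ℤ) : Prop :=
  ∀ n ≥ m, ∀ x, gridIndex m x = p → chaconU n x = x + gridVec m (q - p)

lemma Carries.quarter {m : ℕ} {α : Fin 2 × Fin 2} {p q : ℤ × ℤ} (h : Carries m p q) :
    Carries (m + 1) (quarter α p) (quarter α q) := by
  intro n hn x hx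
  rw [gridVec_quarter_sub]
  exact h n (by omega) x (gridIndex_of_gridIndex_succ_eq_quarter hx)

lemma carries_of_chaconU_eq_add {m : ℕ} {p q : ℤ × ℤ} (hp : p.1 + 2 < 2 ^ (m + 1) ∨ 1 ≤ p.2)
    (h : ∀ x, gridIndex (m + 1) x = p → chaconU (m + 1) x = x + gridVec (m + 1) (q - p)) :
    Carries (m + 1) p q := by
  intro n hn x hx
  rw [chaconU_eq_of_le hn (hx ▸ hp), h x hx]

/-! ### The columns of squares -/

/-- First level of the tower: the upper left corner square. -/
def base (m : ℕ) : ℤ × ℤ := (0, 2 ^ m - 1)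

/-- Last level of the tower: the left neighbour of the lower right corner square. -/
def top (m : ℕ) : ℤ × ℤ := (2 ^ m - 2, 0)

/-- The lower right corner square, which supplies the spacers of the next tower. -/
def corner (m : ℕ) : ℤ × ℤ := (2 ^ m - 1, 0)

lemma base_succ (m : ℕ) : base (m + 1) = quarter (0, 1) (base m) := by
  simp only [base, quarter, pow_succ, Prod.mk.injEq]
  omega

lemma top_succ (m : ℕ) : top (m + 1) = quarter (0, 0) (corner m) := by
  simp only [top, corner, quarter, pow_succ, Prod.mk.injEq]
  omega

lemma corner_succ (m : ℕ) : corner (m + 1) = quarter (1, 0) (corner m) := by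
  simp only [corner, quarter, pow_succ, Prod.mk.injEq]
  omega

/-- The column of the cutting-and-stacking construction: the squares of side `2 ^ (-m)`, except the
lower right corner square, listed in the order in which `U` visits them. The quarters of the corner
square serve as spacers between the copies of the previous column, except between the first two. -/
def tower : ℕ → List (ℤ × ℤ)
  | 0 => []
  | m + 1 =>
      (tower m).map (quarter (0, 1)) ++ (tower m).map (quarter (1, 1)) ++
      [quarter (0, 1) (corner m)] ++ (tower m).map (quarter (0, 0)) ++
      [quarter (1, 1) (corner m)] ++ (tower m).map (quarter (1, 0)) ++
      [quarter (0, 0) (corner m)]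

lemma length_tower (m : ℕ) : (tower m).length = 4 ^ m - 1 := by
  induction m with
  | zero => rfl
  | succ m ih =>
    simp only [tower, List.length_append, List.length_map, List.length_singleton, ih, pow_succ]
    have : 0 < 4 ^ m := by positivity
    omega

lemma head?_tower (m : ℕ) : (tower (m + 1)).head? = some (base (m + 1)) := by
  induction m with
  | zero => rfl
  | succ m ih =>
    rw [tower, base_succ]
    simp [ih]

lemma getLast?_tower (m : ℕ) : (tower (m + 1)).getLast? = some (top (m + 1)) := by
  rw [tower, List.getLast?_concat, top_succ]

lemma carries_of_chaconU_eq_add_tv {m : ℕ} {c d : ℤ} {p q : ℤ × ℤ} {a b : ℝ}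
    (hp : p = (2 ^ (m + 2) - c, d)) (hcd : 3 ≤ c ∨ 1 ≤ d)
    (hpq : gridVec (m + 2) (q - p) = tv a b)
    (h : ∀ x, rep x.1 ∈ Ico (1 - c * (1 / 2 ^ (m + 2)) : ℝ) (1 - (c - 1) * (1 / 2 ^ (m + 2))) →
      rep x.2 ∈ Ico (d * (1 / 2 ^ (m + 2)) : ℝ) ((d + 1) * (1 / 2 ^ (m + 2))) →
      chaconU (m + 2) x = x + tv a b) : Carries (m + 2) p q := by
  refine carries_of_chaconU_eq_add ?_ fun x hx => ?_
  · rw [hp]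
    exact hcd.imp (fun hc => by linarith) id
  · obtain ⟨h1, h2⟩ := rep_mem_Ico_of_gridIndex_eq (hx.trans hp)
    exact (h x h1 h2).trans (congrArg _ hpq.symm)

lemma carries_quarter_top_base (m : ℕ) :
    Carries (m + 2) (quarter (0, 1) (top (m + 1))) (quarter (1, 1) (base (m + 1))) := by
  refine carries_of_chaconU_eq_add_tv (c := 4) (d := 1) (a := 5 * (1 / 2 ^ (m + 2)) - 1)
    (b := 1 - 2 * (1 / 2 ^ (m + 2))) ?_ (by norm_num) ?_ fun x => ?_
  · ext <;> simp only [top, quarter, Fin.val_zero, Fin.val_one] <;> ring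
  · simp only [gridVec, quarter, base, top, Prod.fst_sub, Prod.snd_sub, Fin.val_zero, Fin.val_one]
    congr 1 <;> push_cast <;> field_simp <;> ring
  · have : (0 : ℝ) < 1 / 2 ^ (m + 2) := by positivity
    simp only [chaconU, mem_Ico]
    push_cast
    grind

lemma carries_quarter_top_corner (m : ℕ) :
    Carries (m + 2) (quarter (0, 0) (top (m + 1))) (quarter (1, 1) (corner (m + 1))) := by
  refine carries_of_chaconU_eq_add_tv (c := 4) (d := 0) (a := 3 * (1 / 2 ^ (m + 2)))
    (b := 1 / 2 ^ (m + 2)) ?_ (by norm_num) ?_ fun x => ?_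
  · ext <;> simp only [top, quarter, Fin.val_zero] <;> ring
  · simp only [gridVec, quarter, top, corner, Prod.fst_sub, Prod.snd_sub, Fin.val_zero, Fin.val_one]
    congr 1 <;> push_cast <;> field_simp; ring
  · have : (0 : ℝ) < 1 / 2 ^ (m + 2) := by positivity
    simp only [chaconU, mem_Ico]
    push_cast
    grind

lemma carries_quarter_top_corner_right (m : ℕ) (j : Fin 2) :
    Carries (m + 2) (quarter (1, j) (top (m + 1))) (quarter (0, j) (corner (m + 1))) := by
  refine carries_of_chaconU_eq_add_tv (c := 3) (d := j) (a := 1 / 2 ^ (m + 2))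
    (b := 0) ?_ (.inl le_rfl) ?_ fun x => ?_
  · ext <;> simp only [top, quarter, Fin.val_one] <;> ring
  · simp only [gridVec, quarter, top, corner, Prod.fst_sub, Prod.snd_sub, Fin.val_zero, Fin.val_one]
    congr 1 <;> push_cast <;> field_simp <;> ring
  · have : (0 : ℝ) < 1 / 2 ^ (m + 2) := by positivity
    obtain rfl | rfl : j = 0 ∨ j = 1 := by omega
    all_goals
      simp only [chaconU, mem_Ico, Fin.val_zero, Fin.val_one]
      push_cast
      grind

lemma carries_quarter_corner_base (m : ℕ) (i : Fin 2) :
    Carries (m + 2) (quarter (i, 1) (corner (m + 1))) (quarter (i, 0) (base (m + 1))) := by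
  refine carries_of_chaconU_eq_add_tv (c := 2 - i) (d := 1) (a := 2 * (1 / 2 ^ (m + 2)) - 1)
    (b := 1 - 3 * (1 / 2 ^ (m + 2))) ?_ (.inr le_rfl) ?_ fun x => ?_
  · ext <;> simp only [corner, quarter, Fin.val_one] <;> ring
  · simp only [gridVec, quarter, base, corner, Prod.fst_sub, Prod.snd_sub, Fin.val_zero,
      Fin.val_one]
    congr 1 <;> push_cast <;> field_simp <;> ring
  · have : (0 : ℝ) < 1 / 2 ^ (m + 2) := by positivity
    obtain rfl | rfl : i = 0 ∨ i = 1 := by omega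
    all_goals
      simp only [chaconU, mem_Ico, Fin.val_zero, Fin.val_one]
      push_cast
      grind

lemma isChain_tower_one : (tower 1).IsChain (Carries 1) := by
  have hleft : Carries 1 (0, 1) (1, 1) := by
    refine carries_of_chaconU_eq_add (by norm_num) fun x hx => ?_
    obtain ⟨h1, h2⟩ := rep_mem_Ico_of_gridIndex_eq (c := 2) (d := 1) (hx.trans (by norm_num))
    norm_num at h1 h2
    simp only [chaconU]
    rw [if_pos ⟨h1.1, h1.2, h2⟩]
    norm_num [gridVec]
  have hright : Carries 1 (1, 1) (0, 0) := by
    refine carries_of_chaconU_eq_add (by norm_num) fun x hx => ?_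
    obtain ⟨h1, h2⟩ := rep_mem_Ico_of_gridIndex_eq (c := 1) (d := 1) (hx.trans (by norm_num))
    norm_num at h1 h2
    simp only [chaconU]
    rw [if_neg fun h => h.2.1.not_ge h1.1, if_pos ⟨h1.1, h1.2, h2⟩]
    norm_num [gridVec]
  simpa [tower, quarter, corner] using And.intro hleft hright

lemma isChain_tower (m : ℕ) : (tower m).IsChain (Carries m) := by
  induction m with
  | zero => exact List.isChain_nil
  | succ m ih =>
    rcases m with _ | m
    · exact isChain_tower_one
    have hmap (α : Fin 2 × Fin 2) :
        ((tower (m + 1)).map (quarter α)).IsChain (Carries (m + 2)) :=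
      (List.isChain_map _).2 (ih.imp fun _ _ => Carries.quarter)
    rw [tower]
    simp [List.isChain_append, head?_tower, getLast?_tower, List.isChain_cons, hmap,
      carries_quarter_top_base, carries_quarter_top_corner, carries_quarter_top_corner_right,
      carries_quarter_corner_base]

lemma corner_mem_gridSquares (m : ℕ) : corner m ∈ gridSquares m := by
  have : (0 : ℤ) < 2 ^ m := by positivity
  simp only [mem_gridSquares, corner]
  omega

lemma mem_tower {m : ℕ} {p : ℤ × ℤ} : p ∈ tower m ↔ p ∈ gridSquares m ∧ p ≠ corner m := by
  induction m generalizing p with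
  | zero =>
    obtain ⟨i, j⟩ := p
    simp only [tower, mem_gridSquares, corner, List.not_mem_nil, pow_zero, ne_eq, Prod.mk.injEq]
    grind
  | succ m ih =>
    have hmem {α β : Fin 2 × Fin 2} {q : ℤ × ℤ} :
        quarter α q ∈ (tower m).map (quarter β) ↔ α = β ∧ q ∈ tower m := by
      simp only [List.mem_map, quarter_inj]
      grind
    obtain ⟨α, q, rfl⟩ := exists_eq_quarter p
    have hcorner := corner_mem_gridSquares m
    rw [quarter_mem_gridSquares, corner_succ]
    simp only [tower, List.mem_append, List.mem_singleton, hmem, ne_eq, quarter_inj, ih]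
    obtain ⟨i, j⟩ := α
    fin_cases i <;> fin_cases j <;> simp <;> grind

/-! ### Return times -/

lemma Carries.eq_add_gridVec {U : T2 → T2} {m : ℕ} {p q : ℤ × ℤ} {x : T2} (h : Carries m p q)
    (hx : ∃ N, ∀ n, N ≤ n → chaconU n x = U x) (hxp : gridIndex m x = p) :
    U x = x + gridVec m (q - p) := by
  obtain ⟨N, hN⟩ := hx
  rw [← hN (max N m) (le_max_left ..), h _ (le_max_right ..) x hxp]

lemma iterate_eq_add_gridVec {U : T2 → T2} {m : ℕ} {l : List (ℤ × ℤ)} (hl : l.IsChain (Carries m))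
    (hsq : ∀ p ∈ l, p ∈ gridSquares m) {x : T2}
    (hx : ∀ j, ∃ N, ∀ n, N ≤ n → chaconU n (U^[j] x) = U (U^[j] x)) {i j : ℕ}
    (hij : i + j < l.length) (hxi : gridIndex m x = l[i]) :
    U^[j] x = x + gridVec m (l[i + j] - l[i]) := by
  induction j with
  | zero => simp [gridVec_zero]
  | succ j ih =>
    have hprev : gridIndex m x + (l[i + j] - l[i]) = l[i + j] := by rw [hxi, add_sub_cancel]
    have hindex : gridIndex m (U^[j] x) = l[i + j] := by
      rw [ih (by omega) hxi, gridIndex_add_gridVec (by simp [hprev, hsq]), hprev]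
    have hcarries : Carries m l[i + j] l[i + (j + 1)] := List.isChain_iff_getElem.1 hl (i + j) hij
    rw [Function.iterate_succ_apply', hcarries.eq_add_gridVec (hx j) hindex, ih (by omega) hxi,
      add_assoc, ← gridVec_add, sub_add_sub_cancel']

lemma iterate_eq_add_gridVec_of_mem_tower {U : T2 → T2} {m : ℕ} {p : ℤ × ℤ} (hp : p ∈ tower m)
    {x : T2} (hx : ∀ j, ∃ N, ∀ n, N ≤ n → chaconU n (U^[j] x) = U (U^[j] x))
    (hxp : gridIndex (m + 1) x = quarter (0, 1) p) :
    U^[4 ^ m - 1] x = x + gridVec (m + 1) (1, 0) := by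
  set l := (tower m).map (quarter (0, 1)) ++ (tower m).map (quarter (1, 1)) with hl
  have hprefix : l <+: tower (m + 1) := by
    simp only [tower, List.append_assoc, hl, List.prefix_append_right_inj]
    exact List.prefix_append ..
  have hsq (q) (hq : q ∈ l) : q ∈ gridSquares (m + 1) := (mem_tower.1 (hprefix.subset hq)).1
  obtain ⟨i, hi, rfl⟩ := List.getElem_of_mem hp
  rw [length_tower] at hi
  have hlength : i + (4 ^ m - 1) < l.length := by
    simp only [hl, List.length_append, List.length_map, length_tower]
    omega
  rw [iterate_eq_add_gridVec ((isChain_tower (m + 1)).prefix hprefix) hsq hx hlength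
    (by simp [hl, hxp, length_tower, hi])]
  simp [hl, length_tower, hi, quarter]

lemma ae_forall_iterate_chaconU_eventually_eq {U : T2 → T2}
    (hlim : ∀ᵐ x ∂(volume : Measure T2), ∃ N : ℕ, ∀ n, N ≤ n → chaconU n x = U x) :
    ∀ᵐ x ∂(volume : Measure T2), ∀ j, ∃ N : ℕ, ∀ n, N ≤ n → chaconU n (U^[j] x) = U (U^[j] x) :=
  ae_all_iff.2 fun j => ((tendsto_ae_of_chaconU_eventually_eq hlim).iterate j).eventually hlim

lemma volume_div_four_le_volume_image_iterate_inter {U : T2 → T2}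
    (hlim : ∀ᵐ x ∂(volume : Measure T2), ∃ N : ℕ, ∀ n, N ≤ n → chaconU n x = U x) {m : ℕ}
    {S : Finset (ℤ × ℤ)} (hS : ∀ p ∈ S, p ∈ tower m) :
    volume (gridIndex m ⁻¹' S) / 4 ≤
      volume (U^[4 ^ m - 1] '' (gridIndex m ⁻¹' S) ∩ gridIndex m ⁻¹' S) := by
  have hSsq : S ⊆ gridSquares m := fun p hp => (mem_tower.1 (hS p hp)).1
  have hquarter (α : Fin 2 × Fin 2) : S.image (quarter α) ⊆ gridSquares (m + 1) :=
    Finset.image_subset_iff.2 fun p hp => quarter_mem_gridSquares.2 (hSsq hp)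
  have hvol : volume (gridIndex m ⁻¹' S) / 4 =
      volume (gridIndex (m + 1) ⁻¹' (S.image (quarter (0, 1)))) := by
    rw [volume_gridIndex_preimage hSsq, volume_gridIndex_preimage (hquarter _),
      Finset.card_image_of_injective _ fun p q h => (quarter_inj.1 h).2, pow_succ,
      div_eq_mul_inv, div_eq_mul_inv, div_eq_mul_inv, mul_assoc, ENNReal.mul_inv] <;> simp
  rw [hvol]
  refine measure_le_measure_image_inter (c := gridVec (m + 1) (1, 0)) ?_ ?_ ?_
  · filter_upwards [ae_forall_iterate_chaconU_eventually_eq hlim] with x hx hxS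
    obtain ⟨p, hp, hxp⟩ := Finset.mem_image.1 hxS
    exact iterate_eq_add_gridVec_of_mem_tower (hS p hp) hx hxp.symm
  · intro x hxS
    obtain ⟨p, hp, hxp⟩ := Finset.mem_image.1 hxS
    rwa [mem_preimage, gridIndex_of_gridIndex_succ_eq_quarter hxp.symm]
  · intro x hxS
    obtain ⟨p, hp, hxp⟩ := Finset.mem_image.1 hxS
    have hadd : gridIndex (m + 1) x + (1, 0) = quarter (1, 1) p := by simp [← hxp, quarter]
    have hindex : gridIndex (m + 1) (x + gridVec (m + 1) (1, 0)) = quarter (1, 1) p :=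
      (gridIndex_add_gridVec (hadd ▸ quarter_mem_gridSquares.2 (hSsq hp))).trans hadd
    rwa [mem_preimage, gridIndex_of_gridIndex_succ_eq_quarter hindex]

/-- The squares of side `2 ^ (-m)` that make up the square of side `2 ^ (r - m)` in the upper left
corner of `[0, 1)²`. The set `Q_n` is their union when `r - m = 1 - n`. -/
def upperLeftSquares (m r : ℕ) : Finset (ℤ × ℤ) :=
  Finset.Ico 0 (2 ^ r) ×ˢ Finset.Ico (2 ^ m - 2 ^ r) (2 ^ m)

lemma card_upperLeftSquares (m r : ℕ) : (upperLeftSquares m r).card = 4 ^ r := by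
  simp [upperLeftSquares, Int.toNat_pow_of_nonneg, ← mul_pow]

lemma mem_tower_of_mem_upperLeftSquares {m r : ℕ} (hr : r < m) {p : ℤ × ℤ}
    (hp : p ∈ upperLeftSquares m r) : p ∈ tower m := by
  have h2 : (2 : ℤ) ^ r * 2 ≤ 2 ^ m := by
    rw [← pow_succ]
    exact pow_le_pow_right₀ one_le_two hr
  have h0 : (0 : ℤ) < 2 ^ r := by positivity
  simp only [upperLeftSquares, Finset.mem_product, Finset.mem_Ico] at hp
  simp only [mem_tower, mem_gridSquares, corner, ne_eq, Prod.ext_iff]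
  omega

lemma preimage_upperLeftSquares {m r n : ℕ} (h : r + n = m + 1) :
    gridIndex m ⁻¹' (upperLeftSquares m r) = {x : T2 | 0 ≤ rep x.1 ∧ rep x.1 < 2 / 2 ^ n ∧
      1 - 2 / 2 ^ n ≤ rep x.2 ∧ rep x.2 < 1} := by
  have hside : (2 / 2 ^ n : ℝ) = 2 ^ r / 2 ^ m := by
    rw [div_eq_div_iff (by positivity) (by positivity), ← pow_succ', ← pow_add, h]
  have hM : (0 : ℝ) < 2 ^ m := by positivity
  ext x
  simp only [upperLeftSquares, gridIndex, Finset.coe_product, Finset.coe_Ico, mem_preimage,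
    mem_prod, mem_Ico, mem_ofPred_eq, Int.le_floor, Int.floor_lt, hside, and_assoc,
    one_sub_div hM.ne', div_le_iff₀' hM, lt_div_iff₀' hM]
  push_cast
  rw [mul_nonneg_iff_of_pos_left hM, mul_lt_iff_lt_one_right hM]

end Chacon

open Chacon in
theorem chacon_return_times_general (U : T2 → T2)
    (hlim : ∀ᵐ x ∂(volume : Measure T2), ∃ N : ℕ, ∀ n, N ≤ n → chaconU n x = U x)
    (n : ℕ) (hn : 2 ≤ n) (k : ℕ) (hk : n ≤ k)
    (Qn : Set T2)
    (hQn : Qn = {x : T2 | 0 ≤ rep x.1 ∧ rep x.1 < 2 / 2 ^ n ∧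
                          1 - 2 / 2 ^ n ≤ rep x.2 ∧ rep x.2 < 1}) :
    volume Qn = 4 / 4 ^ n ∧
    volume Qn / 4 ≤ volume (U^[4 ^ (k - 1) - 1] '' Qn ∩ Qn) ∧
    (1 / 4 ^ n : ℝ≥0∞) ≤ volume (U^[4 ^ (k - 1) - 1] '' Qn ∩ Qn) := by
  obtain ⟨r, hr⟩ : ∃ r, r + n = k - 1 + 1 := ⟨k - n, by omega⟩
  have hmem (p) (hp : p ∈ upperLeftSquares (k - 1) r) : p ∈ tower (k - 1) :=
    mem_tower_of_mem_upperLeftSquares (by omega) hp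
  rw [← preimage_upperLeftSquares hr] at hQn
  have hvol : volume Qn = 4 / 4 ^ n := by
    rw [hQn, volume_gridIndex_preimage fun p hp => (mem_tower.1 (hmem p hp)).1,
      card_upperLeftSquares, ENNReal.div_eq_div_iff (by simp) (by simp) (by simp) (by simp)]
    norm_cast
    rw [← pow_add, add_comm n, hr, pow_succ]
  have hreturn : volume Qn / 4 ≤ volume (U^[4 ^ (k - 1) - 1] '' Qn ∩ Qn) :=
    hQn ▸ volume_div_four_le_volume_image_iterate_inter hlim hmem
  refine ⟨hvol, hreturn, le_of_eq_of_le ?_ hreturn⟩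
  rw [hvol, ENNReal.div_right_comm, ENNReal.div_self (by simp) (by simp)]

/-- For `n ≥ 2`, `k ≥ n`, and the square `Q_n = [0,2^{1-n}) × [1-2^{1-n},1)` (of measure
`4^{1-n}`), with `h_k = 4^{k-1} - 1`, one has
`μ(U^{h_k}(Q_n) ∩ Q_n) ≥ (1/4)·μ(Q_n) = 4^{-n}`. -/
theorem chacon_return_times (U : T2 → T2)
    (hU : IsAutomorphism U)
    (hlim : ∀ᵐ x ∂(volume : Measure T2), ∃ N : ℕ, ∀ n, N ≤ n → chaconU n x = U x)
    (n : ℕ) (hn : 2 ≤ n) (k : ℕ) (hk : n ≤ k)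
    (Qn : Set T2)
    (hQn : Qn = {x : T2 | 0 ≤ rep x.1 ∧ rep x.1 < 2/2^n ∧
                          1 - 2/2^n ≤ rep x.2 ∧ rep x.2 < 1}) :
    volume Qn = 4 / 4^n ∧
    volume Qn / 4 ≤ volume (U^[4 ^ (k-1) - 1] '' Qn ∩ Qn) ∧
    (1 / 4^n : ℝ≥0∞) ≤ volume (U^[4 ^ (k-1) - 1] '' Qn ∩ Qn) := by
  exact chacon_return_times_general U hlim n hn k hk Qn hQn

end
end
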